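/- arXiv:2301.10911 — 2 statements merged into one kernel-verified Lean document; each statement's English description precedes it below -/
import Mathlib

section
/- Assume in addition that M is positive definite and d₁ ≥ 3, that tr(W) − 2·‖W‖ > 0, and that 0 < γ < 2·(tr(W) − 2·‖W‖). Then E[‖Ψ(γ)‖²_Υ] ≤ tr(Υ·Γ₁·Ω·Γ₁ᵀ) − γ·(2·(tr(W) − 2·‖W‖) − γ) / (τᵀ·P·τ + tr(P·Ω)), and in particular E[‖Ψ(γ)‖²_Υ] < tr(Υ·Γ₁·Ω·Γ₁ᵀ) = E[‖Γ₁(ξ+τ)‖²_Υ]; that is, the asymptotic risk of the semi-modular posterior mean is strictly smaller than that of the cut posterior mean. -/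
open Matrix MeasureTheory ProbabilityTheory

/-- The standard Gaussian measure on `ℝ^m` (iid standard normal coordinates). -/
noncomputable def stdGaussian (m : ℕ) : Measure (Fin m → ℝ) :=
  Measure.pi fun _ => gaussianReal 0 1

/-- `μ` is the multivariate Gaussian law on `ℝ^m` with mean `mean` and covariance
matrix `V`, i.e. the law of `mean + A ζ` for a standard Gaussian `ζ` and any matrix
`A` with `A Aᵀ = V`. -/
def IsGaussianLaw {m : ℕ} (μ : Measure (Fin m → ℝ)) (mean : Fin m → ℝ)
    (V : Matrix (Fin m) (Fin m) ℝ) : Prop :=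
  ∃ A : Matrix (Fin m) (Fin m) ℝ, A * Aᵀ = V ∧
    μ = Measure.map (fun x => mean + A.mulVec x) (stdGaussian m)

/-- The operator (spectral) norm of a real square matrix. -/
noncomputable def matOpNorm {n : ℕ} (A : Matrix (Fin n) (Fin n) ℝ) : ℝ :=
  ‖Matrix.toEuclideanCLM (𝕜 := ℝ) A‖

/-!
Write the law of `ξ` as that of `A x` with `x` standard Gaussian and `A Aᵀ = Ω`, and put
`C = Γ₁ A`, `B = (Γ₁ - Γ) A`, `b = (Γ₁ - Γ) τ`, `Y = B x + b`, `Q = Yᵀ Υ Y`. Since `Γ₁ τ = 0`,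
`Ψ = C x - (γ / Q) Y`, where `C Bᵀ = B Bᵀ = M`. This is a James–Stein estimator: expanding the
square, the cross term `E[(C x)ᵀ Υ Y / Q]` is computed by Stein's identity (integration by parts
against the Gaussian density) and is at least `(tr W - 2 ‖W‖) E[1 / Q]`, because
`Yᵀ Υ M Υ Y ≤ ‖W‖ Q` (`dot_le_opNorm`). Jensen's inequality then bounds `E[1 / Q]` below by
`1 / E[Q]`.

The singularity at `Q = 0` is avoided by replacing `Q` with `Q + ε`. All functions involved are
then bounded and smooth, up to the linear factor `C x`, so Stein's identity applies (`stein_pi`,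
`stein_reg`), and the argument above gives the bound with `E[Q] + ε` in place of `E[Q]`
(`risk_reg`). Letting `ε → 0`, Fatou's lemma transfers the bound to the exact estimator
(`risk_bound`): an upper bound on the integral of a nonnegative limit is all that is needed.
-/

/-! ### Stein's identity -/

theorem integrable_gaussianReal_iff (f : ℝ → ℝ) :
    Integrable f (gaussianReal 0 1) ↔ Integrable (fun x => gaussianPDFReal 0 1 x * f x) := by
  rw [gaussianReal_of_var_ne_zero 0 one_ne_zero,
    integrable_withDensity_iff_integrable_smul' (measurable_gaussianPDF 0 1)
      (ae_of_all _ fun x => gaussianPDF_lt_top)]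
  simp [toReal_gaussianPDF]

theorem hasDerivAt_gaussianPDFReal (x : ℝ) :
    HasDerivAt (gaussianPDFReal 0 1) (-x * gaussianPDFReal 0 1 x) x := by
  rw [gaussianPDFReal_def]
  have h : HasDerivAt (fun y : ℝ => -(y - 0) ^ 2 / (2 * ((1 : NNReal) : ℝ))) (-x) x := by
    have := ((((hasDerivAt_id x).sub_const 0).pow 2).neg).div_const (2 * ((1 : NNReal) : ℝ))
    convert! this using 1
    simp
    ring
  convert! (h.exp).const_mul ((√(2 * Real.pi * ((1 : NNReal) : ℝ)))⁻¹) using 1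
  ring

/-- Stein's identity in one dimension: integration by parts, since the Gaussian density `φ`
satisfies `φ' x = -x φ x`. -/
theorem stein_one (f f' : ℝ → ℝ) (hd : ∀ x, HasDerivAt f (f' x) x)
    (hf : Integrable f (gaussianReal 0 1)) (hxf : Integrable (fun x => x * f x) (gaussianReal 0 1))
    (hf' : Integrable f' (gaussianReal 0 1)) :
    ∫ x, x * f x ∂gaussianReal 0 1 = ∫ x, f' x ∂gaussianReal 0 1 := by
  rw [integrable_gaussianReal_iff] at hf hxf hf'
  have := integral_mul_deriv_eq_deriv_mul_of_integrable (u := f) (u' := f')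
    (v := gaussianPDFReal 0 1) (v' := fun x => -x * gaussianPDFReal 0 1 x)
    (fun x _ => hd x) (fun x _ => hasDerivAt_gaussianPDFReal x)
    (hxf.neg.congr (ae_of_all _ fun x => by simp; ring))
    (hf'.congr (ae_of_all _ fun x => by simp; ring))
    (hf.congr (ae_of_all _ fun x => by simp; ring))
  rw [integral_gaussianReal_eq_integral_smul one_ne_zero,
    integral_gaussianReal_eq_integral_smul one_ne_zero]
  simp only [smul_eq_mul]
  rw [show (fun x => gaussianPDFReal 0 1 x * f' x) = fun x => f' x * gaussianPDFReal 0 1 x by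
    ext; ring, ← neg_eq_iff_eq_neg.mpr this, ← integral_neg]
  congr 1; ext x; ring

/-- Stein's identity for one coordinate of a standard Gaussian vector, with `f'` the partial
derivative in that coordinate: Fubini reduces it to `stein_one`. -/
theorem stein_pi {m : ℕ} (k : Fin m) (f f' : (Fin m → ℝ) → ℝ)
    (hd : ∀ x, HasDerivAt (fun t : ℝ => f (x + t • Pi.single k 1)) (f' x) 0)
    (hf : Integrable f (stdGaussian m)) (hxf : Integrable (fun x => x k * f x) (stdGaussian m))
    (hf' : Integrable f' (stdGaussian m)) :
    ∫ x, x k * f x ∂(stdGaussian m) = ∫ x, f' x ∂(stdGaussian m) := by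
  obtain _ | n := m
  · exact k.elim0
  have mp := (measurePreserving_piFinSuccAbove
    (fun _ : Fin (n + 1) => gaussianReal 0 1) k).symm
  change MeasurePreserving _ _ (stdGaussian (n + 1)) at mp
  set e := (MeasurableEquiv.piFinSuccAbove (fun _ : Fin (n + 1) => ℝ) k).symm with he
  rw [← mp.integral_comp', ← mp.integral_comp']
  have i1 := (mp.integrable_comp_emb e.measurableEmbedding).mpr hf
  have i2 := (mp.integrable_comp_emb e.measurableEmbedding).mpr hxf
  have i3 := (mp.integrable_comp_emb e.measurableEmbedding).mpr hf'
  have ev : ∀ s y, e (s, y) = Fin.insertNth (α := fun _ => ℝ) k s y := fun s y => rfl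
  refine (integral_prod_symm _ i2).trans (Eq.trans ?_ (integral_prod_symm _ i3).symm)
  apply integral_congr_ae
  filter_upwards [i1.prod_left_ae, i2.prod_left_ae, i3.prod_left_ae] with y h1 h2 h3
  simp only [Function.comp_def, ev, Fin.insertNth_apply_same] at h1 h2 h3 ⊢
  refine stein_one _ _ (fun s => ?_) h1 h2 h3
  have h := hd (Fin.insertNth (α := fun _ => ℝ) k s y)
  have h' : HasDerivAt (fun t : ℝ => t - s) 1 s := (hasDerivAt_id s).sub_const s
  rw [← sub_self s] at h
  have := HasDerivAt.comp (h := fun t : ℝ => t - s) s h h'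
  rw [mul_one] at this
  convert! this using 1
  ext t
  simp only [Function.comp]
  congr 1
  ext j
  refine Fin.succAboveCases k ?_ (fun i => ?_) j
  · simp
  · simp

/-! ### Second moments of a Gaussian vector -/

instance (m : ℕ) : IsProbabilityMeasure (stdGaussian m) := by
  unfold _root_.stdGaussian; infer_instance

theorem memLp_coord {m : ℕ} (k : Fin m) : MemLp (fun x => x k) 2 (stdGaussian m) := by
  have := (memLp_id_gaussianReal (μ := 0) (v := 1) 2).comp_measurePreserving
    (measurePreserving_eval (fun _ : Fin m => gaussianReal 0 1) k)
  exact this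

theorem integrable_coord {m : ℕ} (k : Fin m) : Integrable (fun x => x k) (stdGaussian m) :=
  (memLp_coord k).integrable (by norm_num)

theorem integrable_coord_mul {m : ℕ} (k l : Fin m) :
    Integrable (fun x => x k * x l) (stdGaussian m) :=
  (memLp_coord k).integrable_mul (memLp_coord l)

/-- The mean is Stein's identity applied to a constant function. -/
theorem integral_coord {m : ℕ} (k : Fin m) : ∫ x, x k ∂(stdGaussian m) = 0 := by
  have := stein_pi k (fun _ => 1) (fun _ => 0) (fun x => hasDerivAt_const _ _)
    (integrable_const _) (by simpa using integrable_coord k) (integrable_const _)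
  simpa using this

/-- The covariance is Stein's identity applied to a coordinate function. -/
theorem integral_coord_mul {m : ℕ} (k l : Fin m) :
    ∫ x, x k * x l ∂(stdGaussian m) = (1 : Matrix (Fin m) (Fin m) ℝ) l k := by
  have := stein_pi k (fun x => x l) (fun _ => (1 : Matrix (Fin m) (Fin m) ℝ) l k)
    (fun x => ?_) (integrable_coord l) (integrable_coord_mul k l) (integrable_const _)
  · simpa using this
  · have h := ((hasDerivAt_id (0 : ℝ)).mul_const
      ((Pi.single k 1 : Fin m → ℝ) l)).const_add (x l)
    convert! h using 1
    simp [Matrix.one_apply, Pi.single_apply]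

theorem quad_moment {m : ℕ} (N : Matrix (Fin m) (Fin m) ℝ) (w : Fin m → ℝ) (c : ℝ) :
    Integrable (fun x => x ⬝ᵥ N *ᵥ x + w ⬝ᵥ x + c) (stdGaussian m) ∧
      ∫ x, (x ⬝ᵥ N *ᵥ x + w ⬝ᵥ x + c) ∂(stdGaussian m) = N.trace + c := by
  have e1 : ∀ x : Fin m → ℝ, x ⬝ᵥ N *ᵥ x = ∑ i, ∑ j, N i j * (x i * x j) := by
    intro x
    simp only [dotProduct, mulVec, Finset.mul_sum]
    exact Finset.sum_congr rfl fun i _ => Finset.sum_congr rfl fun j _ => by ring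
  have q1 : Integrable (fun x => x ⬝ᵥ N *ᵥ x) (stdGaussian m) := by
    simp only [e1]
    exact integrable_finsetSum _ fun i _ => integrable_finsetSum _ fun j _ =>
      (integrable_coord_mul i j).const_mul _
  have q2 : Integrable (fun x => w ⬝ᵥ x) (stdGaussian m) :=
    integrable_finsetSum _ fun i _ => (integrable_coord i).const_mul _
  refine ⟨(q1.add q2).add (integrable_const c), ?_⟩
  rw [show ∫ x, (x ⬝ᵥ N *ᵥ x + w ⬝ᵥ x + c) ∂(stdGaussian m) = _ from
    integral_add (q1.add q2) (integrable_const c), integral_add q1 q2]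
  have v1 : ∫ x, x ⬝ᵥ N *ᵥ x ∂(stdGaussian m) = N.trace := by
    simp only [e1]
    have hi : ∀ i j, Integrable (fun x : Fin m → ℝ => N i j * (x i * x j)) (stdGaussian m) :=
      fun i j => (integrable_coord_mul i j).const_mul _
    refine (integral_finsetSum Finset.univ fun i _ =>
      integrable_finsetSum Finset.univ fun j _ => hi i j).trans ?_
    refine Finset.sum_congr rfl fun i _ => ?_
    refine (integral_finsetSum Finset.univ fun j _ => hi i j).trans ?_
    simp [integral_const_mul, integral_coord_mul, Matrix.one_apply]
  have v2 : ∫ x, w ⬝ᵥ x ∂(stdGaussian m) = 0 := by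
    simp only [dotProduct]
    rw [integral_finsetSum _ fun i _ => (integrable_coord i).const_mul _]
    simp [integral_const_mul, integral_coord]
  rw [v1, v2]; simp

/-! ### A spectral bound and a Fatou bound -/

/-- `yᵀ Υ M Υ y ≤ ‖Υ M‖ yᵀ Υ y`. With `Υ = Rᵀ R`, an eigenvector `v` of the symmetric matrix
`R M Rᵀ` gives the eigenvector `Rᵀ v` of `Υ M` for the same eigenvalue (unless `Rᵀ v = 0`), so
the eigenvalues of `R M Rᵀ` are at most `‖Υ M‖`. -/
theorem dot_le_opNorm {d : ℕ} (Υ M : Matrix (Fin d) (Fin d) ℝ) (hΥ : Υ.PosSemidef)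
    (hM : M.IsSymm) (y : Fin d → ℝ) :
    (Υ *ᵥ y) ⬝ᵥ M *ᵥ (Υ *ᵥ y) ≤ matOpNorm (Υ * M) * (y ⬝ᵥ Υ *ᵥ y) := by
  obtain ⟨R, hR⟩ : ∃ R : Matrix (Fin d) (Fin d) ℝ, Υ = Rᵀ * R := by
    open scoped MatrixOrder in
    obtain ⟨R, hR⟩ := CStarAlgebra.nonneg_iff_eq_star_mul_self.mp hΥ.nonneg
    exact ⟨R, by simpa [Matrix.star_eq_conjTranspose] using hR⟩
  set c := matOpNorm (Υ * M) with hc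
  have hc0 : 0 ≤ c := norm_nonneg _
  set H : Matrix (Fin d) (Fin d) ℝ := c • 1 - R * M * Rᵀ with hH
  have hHh : H.IsHermitian := by
    simp [hH, Matrix.IsHermitian, Matrix.mul_assoc, hM.eq]
  have hpsd : H.PosSemidef := by
    rw [hHh.posSemidef_iff_eigenvalues_nonneg]
    intro i
    set v : Fin d → ℝ := (hHh.eigenvectorBasis i).ofLp with hv
    set l := hHh.eigenvalues i
    change 0 ≤ l
    have hvne : v ≠ 0 := by
      intro h
      apply hHh.eigenvectorBasis.toBasis.ne_zero i
      ext j
      simpa using congrFun h j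
    have h1 : H *ᵥ v = l • v := hHh.mulVec_eigenvectorBasis i
    have h2 : R *ᵥ (M *ᵥ (Rᵀ *ᵥ v)) = (c - l) • v := by
      rw [hH, sub_mulVec, smul_mulVec, one_mulVec, ← mulVec_mulVec, ← mulVec_mulVec] at h1
      rw [sub_smul, ← h1]; abel
    have h3 : (Υ * M) *ᵥ (Rᵀ *ᵥ v) = (c - l) • (Rᵀ *ᵥ v) := by
      rw [hR, ← mulVec_mulVec, ← mulVec_mulVec, h2, mulVec_smul]
    -- `l` is an eigenvalue of `c - R M Rᵀ`, so `c - l` is one of `Υ M` unless `Rᵀ v = 0`.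
    by_cases hz : Rᵀ *ᵥ v = 0
    · rw [hz] at h2
      simp only [mulVec_zero] at h2
      rcases smul_eq_zero.mp h2.symm with h | h
      · linarith
      · exact absurd h hvne
    · have h4 := (Matrix.toEuclideanCLM (𝕜 := ℝ) (Υ * M)).le_opNorm (WithLp.toLp 2 (Rᵀ *ᵥ v))
      rw [toEuclideanCLM_toLp, h3, WithLp.toLp_smul, norm_smul] at h4
      have hpos : 0 < ‖WithLp.toLp 2 (Rᵀ *ᵥ v)‖ := by
        rw [norm_pos_iff]
        intro h
        exact hz (by simpa using h)
      have h5 : ‖c - l‖ ≤ c := le_of_mul_le_mul_right h4 hpos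
      have := le_trans (le_abs_self _) h5
      linarith
  have h := hpsd.dotProduct_mulVec_nonneg (R *ᵥ y)
  simp only [star_trivial, hH, sub_mulVec, smul_mulVec, one_mulVec, dotProduct_sub,
    dotProduct_smul, smul_eq_mul] at h
  have e1 : (R *ᵥ y) ⬝ᵥ (R *ᵥ y) = y ⬝ᵥ Υ *ᵥ y := by
    rw [hR, ← mulVec_mulVec, dotProduct_mulVec y, vecMul_transpose]
  have e2 : (R *ᵥ y) ⬝ᵥ (R * M * Rᵀ) *ᵥ (R *ᵥ y) = (Υ *ᵥ y) ⬝ᵥ M *ᵥ (Υ *ᵥ y) := by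
    rw [hR, ← mulVec_mulVec, ← mulVec_mulVec, ← mulVec_mulVec, dotProduct_mulVec (R *ᵥ y),
      ← mulVec_transpose]
  rw [e1, e2] at h
  linarith

/-- Fatou's lemma in the form: nonnegative functions with integrals at most `r n → s` have a
pointwise limit with integral at most `s`. -/
theorem integral_le_of_tendsto_of_le {α : Type*} [MeasurableSpace α] {μ : Measure α}
    (F : ℕ → α → ℝ) (G : α → ℝ) (r : ℕ → ℝ) (s : ℝ) (hF : ∀ n, Measurable (F n))
    (hF0 : ∀ n x, 0 ≤ F n x) (hi : ∀ n, Integrable (F n) μ)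
    (hFG : ∀ x, Filter.Tendsto (fun n => F n x) Filter.atTop (nhds (G x)))
    (hr : ∀ n, ∫ x, F n x ∂μ ≤ r n) (hrs : Filter.Tendsto r Filter.atTop (nhds s)) :
    ∫ x, G x ∂μ ≤ s := by
  have hG : Measurable G := measurable_of_tendsto_metrizable hF (tendsto_pi_nhds.mpr hFG)
  have hG0 : ∀ x, 0 ≤ G x := fun x => ge_of_tendsto' (hFG x) fun n => hF0 n x
  have hs : 0 ≤ s := ge_of_tendsto' hrs fun n => (integral_nonneg (hF0 n)).trans (hr n)
  rw [integral_eq_lintegral_of_nonneg_ae (ae_of_all _ hG0) hG.aestronglyMeasurable]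
  refine ENNReal.toReal_le_of_le_ofReal hs ?_
  have e : ∀ x, ENNReal.ofReal (G x)
      = Filter.liminf (fun n => ENNReal.ofReal (F n x)) Filter.atTop := fun x =>
    ((ENNReal.continuous_ofReal.tendsto _).comp (hFG x)).liminf_eq.symm
  simp only [e]
  refine (lintegral_liminf_le fun n => (hF n).ennreal_ofReal).trans ?_
  rw [← ((ENNReal.continuous_ofReal.tendsto _).comp hrs).liminf_eq]
  refine Filter.liminf_le_liminf (Filter.Eventually.of_forall fun n => ?_)
  rw [← ofReal_integral_eq_lintegral_ofReal (hi n) (ae_of_all _ (hF0 n))]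
  exact ENNReal.ofReal_le_ofReal (hr n)

/-! ### Stein's identity for the regularized quotient -/

theorem form_comm {d : ℕ} {Υ : Matrix (Fin d) (Fin d) ℝ} (hs : Υ.IsSymm) (u v : Fin d → ℝ) :
    u ⬝ᵥ Υ *ᵥ v = v ⬝ᵥ Υ *ᵥ u := by
  rw [dotProduct_mulVec, ← mulVec_transpose, hs.eq, dotProduct_comm]

theorem form_nonneg {d : ℕ} {Υ : Matrix (Fin d) (Fin d) ℝ} (hΥ : Υ.PosSemidef)
    (u : Fin d → ℝ) : 0 ≤ u ⬝ᵥ Υ *ᵥ u := by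
  simpa using hΥ.dotProduct_mulVec_nonneg u

theorem abs_form_le {d : ℕ} {Υ : Matrix (Fin d) (Fin d) ℝ} (hΥ : Υ.PosSemidef) (hs : Υ.IsSymm)
    (u v : Fin d → ℝ) : |u ⬝ᵥ Υ *ᵥ v| ≤ (u ⬝ᵥ Υ *ᵥ u + v ⬝ᵥ Υ *ᵥ v) / 2 := by
  have h1 := form_nonneg hΥ (u + v)
  have h2 := form_nonneg hΥ (u - v)
  simp only [mulVec_add, mulVec_sub, dotProduct_add, dotProduct_sub, add_dotProduct,
    sub_dotProduct] at h1 h2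
  rw [form_comm hs v u] at h1 h2
  rw [abs_le]
  constructor <;> linarith

theorem continuous_affine_form {d m : ℕ} (Υ : Matrix (Fin d) (Fin d) ℝ)
    (B : Matrix (Fin d) (Fin m) ℝ) (b : Fin d → ℝ) (c : Fin d → ℝ) :
    Continuous fun x : Fin m → ℝ => c ⬝ᵥ Υ *ᵥ (B *ᵥ x + b) := by
  fun_prop

theorem continuous_affine_quad {d m : ℕ} (Υ : Matrix (Fin d) (Fin d) ℝ)
    (B : Matrix (Fin d) (Fin m) ℝ) (b : Fin d → ℝ) :
    Continuous fun x : Fin m → ℝ => (B *ᵥ x + b) ⬝ᵥ Υ *ᵥ (B *ᵥ x + b) := by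
  fun_prop

theorem reg_pos {d m : ℕ} {Υ : Matrix (Fin d) (Fin d) ℝ} (hΥ : Υ.PosSemidef)
    (B : Matrix (Fin d) (Fin m) ℝ) (b : Fin d → ℝ) {ε : ℝ} (hε : 0 < ε)
    (x : Fin m → ℝ) :
    0 < (B *ᵥ x + b) ⬝ᵥ Υ *ᵥ (B *ᵥ x + b) + ε := by
  have := form_nonneg hΥ (B *ᵥ x + b)
  linarith

theorem integrable_inv_reg {d m : ℕ} {Υ : Matrix (Fin d) (Fin d) ℝ} (hΥ : Υ.PosSemidef)
    (B : Matrix (Fin d) (Fin m) ℝ) (b : Fin d → ℝ) {ε : ℝ} (hε : 0 < ε) :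
    Integrable (fun x => 1 / ((B *ᵥ x + b) ⬝ᵥ Υ *ᵥ (B *ᵥ x + b) + ε)) (stdGaussian m) := by
  refine Integrable.of_bound (C := 1 / ε) ?_ (ae_of_all _ fun x => ?_)
  · exact (continuous_const.div₀ ((continuous_affine_quad Υ B b).add continuous_const)
      fun x => (reg_pos hΥ B b hε x).ne').aestronglyMeasurable
  · have := form_nonneg hΥ (B *ᵥ x + b)
    rw [Real.norm_of_nonneg (by positivity)]
    exact one_div_le_one_div_of_le hε (by linarith)

theorem aesm_quot {d m : ℕ} {Υ : Matrix (Fin d) (Fin d) ℝ} (hΥ : Υ.PosSemidef)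
    (B : Matrix (Fin d) (Fin m) ℝ) (b : Fin d → ℝ) {ε : ℝ} (hε : 0 < ε)
    (c : Fin d → ℝ) :
    AEStronglyMeasurable (fun x : Fin m → ℝ => (c ⬝ᵥ Υ *ᵥ (B *ᵥ x + b)) /
      ((B *ᵥ x + b) ⬝ᵥ Υ *ᵥ (B *ᵥ x + b) + ε)) (stdGaussian m) :=
  ((continuous_affine_form Υ B b c).div₀ ((continuous_affine_quad Υ B b).add continuous_const)
      fun x => (reg_pos hΥ B b hε x).ne').aestronglyMeasurable

/-- The regularized quotient is bounded: by `abs_form_le` its numerator is at most a constant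
plus `Q`. -/
theorem abs_quot_le {d m : ℕ} {Υ : Matrix (Fin d) (Fin d) ℝ} (hΥ : Υ.PosSemidef) (hs : Υ.IsSymm)
    (B : Matrix (Fin d) (Fin m) ℝ) (b : Fin d → ℝ) {ε : ℝ} (hε : 0 < ε)
    (c : Fin d → ℝ) (x : Fin m → ℝ) :
    |(c ⬝ᵥ Υ *ᵥ (B *ᵥ x + b)) / ((B *ᵥ x + b) ⬝ᵥ Υ *ᵥ (B *ᵥ x + b) + ε)|
      ≤ (c ⬝ᵥ Υ *ᵥ c) / ε + 1 := by
  have h := reg_pos hΥ B b hε x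
  have h1 := abs_form_le hΥ hs c (B *ᵥ x + b)
  have h2 := form_nonneg hΥ (B *ᵥ x + b)
  have h3 := form_nonneg hΥ c
  rw [abs_div, abs_of_pos h, div_le_iff₀ h]
  set q := (B *ᵥ x + b) ⬝ᵥ Υ *ᵥ (B *ᵥ x + b)
  set a := c ⬝ᵥ Υ *ᵥ c
  have h4 : (a / ε + 1) * (q + ε) = a / ε * q + a + q + ε := by field_simp; ring
  have h5 : 0 ≤ a / ε * q := by positivity
  linarith

theorem integrable_quot {d m : ℕ} {Υ : Matrix (Fin d) (Fin d) ℝ} (hΥ : Υ.PosSemidef) (hs : Υ.IsSymm)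
    (B : Matrix (Fin d) (Fin m) ℝ) (b : Fin d → ℝ) {ε : ℝ} (hε : 0 < ε)
    (c : Fin d → ℝ) :
    Integrable (fun x => (c ⬝ᵥ Υ *ᵥ (B *ᵥ x + b)) /
      ((B *ᵥ x + b) ⬝ᵥ Υ *ᵥ (B *ᵥ x + b) + ε)) (stdGaussian m) :=
  Integrable.of_bound (aesm_quot hΥ B b hε c) _
    (ae_of_all _ fun x => abs_quot_le hΥ hs B b hε c x)

theorem integrable_coord_quot {d m : ℕ} {Υ : Matrix (Fin d) (Fin d) ℝ} (hΥ : Υ.PosSemidef) (hs : Υ.IsSymm)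
    (B : Matrix (Fin d) (Fin m) ℝ) (b : Fin d → ℝ) {ε : ℝ} (hε : 0 < ε)
    (c : Fin d → ℝ) (k : Fin m) :
    Integrable (fun x => x k * ((c ⬝ᵥ Υ *ᵥ (B *ᵥ x + b)) /
      ((B *ᵥ x + b) ⬝ᵥ Υ *ᵥ (B *ᵥ x + b) + ε))) (stdGaussian m) :=
  (integrable_coord k).mul_bdd (aesm_quot hΥ B b hε c)
    (ae_of_all _ fun x => abs_quot_le hΥ hs B b hε c x)

theorem integrable_quot_mul_quot {d m : ℕ} {Υ : Matrix (Fin d) (Fin d) ℝ} (hΥ : Υ.PosSemidef) (hs : Υ.IsSymm)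
    (B : Matrix (Fin d) (Fin m) ℝ) (b : Fin d → ℝ) {ε : ℝ} (hε : 0 < ε)
    (c c' : Fin d → ℝ) :
    Integrable (fun x => (c ⬝ᵥ Υ *ᵥ (B *ᵥ x + b)) /
        ((B *ᵥ x + b) ⬝ᵥ Υ *ᵥ (B *ᵥ x + b) + ε) *
      ((c' ⬝ᵥ Υ *ᵥ (B *ᵥ x + b)) /
        ((B *ᵥ x + b) ⬝ᵥ Υ *ᵥ (B *ᵥ x + b) + ε))) (stdGaussian m) :=
  (integrable_quot hΥ hs B b hε c).mul_bdd (aesm_quot hΥ B b hε c')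
    (ae_of_all _ fun x => abs_quot_le hΥ hs B b hε c' x)

theorem stein_quot {d m : ℕ} {Υ : Matrix (Fin d) (Fin d) ℝ} (hΥ : Υ.PosSemidef) (hs : Υ.IsSymm)
    (B : Matrix (Fin d) (Fin m) ℝ) (b : Fin d → ℝ) {ε : ℝ} (hε : 0 < ε)
    (c : Fin d → ℝ) (k : Fin m) :
    ∫ x, x k * ((c ⬝ᵥ Υ *ᵥ (B *ᵥ x + b)) / ((B *ᵥ x + b) ⬝ᵥ Υ *ᵥ (B *ᵥ x + b) + ε))
        ∂(stdGaussian m)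
      = ∫ x, ((c ⬝ᵥ Υ *ᵥ B.col k) * (1 / ((B *ᵥ x + b) ⬝ᵥ Υ *ᵥ (B *ᵥ x + b) + ε))
          - 2 * ((c ⬝ᵥ Υ *ᵥ (B *ᵥ x + b)) / ((B *ᵥ x + b) ⬝ᵥ Υ *ᵥ (B *ᵥ x + b) + ε) *
            ((B.col k ⬝ᵥ Υ *ᵥ (B *ᵥ x + b)) / ((B *ᵥ x + b) ⬝ᵥ Υ *ᵥ (B *ᵥ x + b) + ε))))
        ∂(stdGaussian m) := by
  refine stein_pi k _ _ (fun x => ?_) (integrable_quot hΥ hs B b hε c)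
    (integrable_coord_quot hΥ hs B b hε c k)
    (((integrable_inv_reg hΥ B b hε).const_mul _).sub
      ((integrable_quot_mul_quot hΥ hs B b hε c (B.col k)).const_mul 2))
  have hq := reg_pos hΥ B b hε x
  set y := B *ᵥ x + b with hy
  set β := B.col k with hβ
  have e : ∀ t : ℝ, B *ᵥ (x + t • Pi.single k 1) + b = y + t • β := by
    intro t
    rw [mulVec_add, mulVec_smul, mulVec_single_one, hy]
    abel
  simp only [e]
  clear_value y β
  simp only [mulVec_add, mulVec_smul, dotProduct_add, dotProduct_smul, add_dotProduct,
    smul_dotProduct, smul_eq_mul]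
  rw [form_comm hs y β]
  have h1 : HasDerivAt (fun t : ℝ => c ⬝ᵥ Υ *ᵥ y + t * (c ⬝ᵥ Υ *ᵥ β)) (c ⬝ᵥ Υ *ᵥ β) 0 := by
    simpa using ((hasDerivAt_id (0 : ℝ)).mul_const (c ⬝ᵥ Υ *ᵥ β)).const_add (c ⬝ᵥ Υ *ᵥ y)
  have h2 : HasDerivAt (fun t : ℝ => y ⬝ᵥ Υ *ᵥ y + t * (β ⬝ᵥ Υ *ᵥ y) +
      t * (β ⬝ᵥ Υ *ᵥ y + t * (β ⬝ᵥ Υ *ᵥ β)) + ε) (2 * (β ⬝ᵥ Υ *ᵥ y)) 0 := by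
    have i := hasDerivAt_id (0 : ℝ)
    have := (((i.mul_const (β ⬝ᵥ Υ *ᵥ y)).const_add (y ⬝ᵥ Υ *ᵥ y)).add
      (i.mul ((i.mul_const (β ⬝ᵥ Υ *ᵥ β)).const_add (β ⬝ᵥ Υ *ᵥ y)))).add_const ε
    convert! this using 1
    simp
    ring
  have h3 := h1.div h2 (by simpa using hq.ne')
  convert! h3 using 1
  · simp
    field_simp

/-- With `Y = B x + b`, `Q = Yᵀ Υ Y` and `q = Q + ε`, Stein's identity summed over the coordinates
gives `E[(C x)ᵀ Υ Y / q] = E[tr (Υ M) / q - 2 Yᵀ Υ M Υ Y / q²]`, and `dot_le_opNorm` bounds the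
last term by `2 ‖Υ M‖ / q`. -/
theorem stein_reg {d m : ℕ} {Υ : Matrix (Fin d) (Fin d) ℝ} (hΥ : Υ.PosSemidef) (hs : Υ.IsSymm)
    (B : Matrix (Fin d) (Fin m) ℝ) (b : Fin d → ℝ) {ε : ℝ} (hε : 0 < ε)
    (C : Matrix (Fin d) (Fin m) ℝ) (M : Matrix (Fin d) (Fin d) ℝ)
    (hM : M = C * Bᵀ) (hMs : M.IsSymm) :
    Integrable (fun x => ((C *ᵥ x) ⬝ᵥ Υ *ᵥ (B *ᵥ x + b)) *
      (1 / ((B *ᵥ x + b) ⬝ᵥ Υ *ᵥ (B *ᵥ x + b) + ε))) (stdGaussian m) ∧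
    ((Υ * M).trace - 2 * matOpNorm (Υ * M)) *
        ∫ x, 1 / ((B *ᵥ x + b) ⬝ᵥ Υ *ᵥ (B *ᵥ x + b) + ε) ∂(stdGaussian m)
      ≤ ∫ x, ((C *ᵥ x) ⬝ᵥ Υ *ᵥ (B *ᵥ x + b)) *
      (1 / ((B *ᵥ x + b) ⬝ᵥ Υ *ᵥ (B *ᵥ x + b) + ε)) ∂(stdGaussian m) := by
  have e : ∀ x : Fin m → ℝ, ((C *ᵥ x) ⬝ᵥ Υ *ᵥ (B *ᵥ x + b)) *
      (1 / ((B *ᵥ x + b) ⬝ᵥ Υ *ᵥ (B *ᵥ x + b) + ε)) = ∑ k, x k *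
      ((C.col k ⬝ᵥ Υ *ᵥ (B *ᵥ x + b)) / ((B *ᵥ x + b) ⬝ᵥ Υ *ᵥ (B *ᵥ x + b) + ε)) := by
    intro x
    have : C *ᵥ x = ∑ k, x k • C.col k := by
      ext i
      simp [mulVec, dotProduct, Finset.sum_apply, mul_comm]
    rw [this, sum_dotProduct, Finset.sum_mul]
    refine Finset.sum_congr rfl fun k _ => ?_
    rw [smul_dotProduct, smul_eq_mul]
    ring
  simp only [e]
  have hi : ∀ k, Integrable (fun x : Fin m → ℝ => x k *
      ((C.col k ⬝ᵥ Υ *ᵥ (B *ᵥ x + b)) / ((B *ᵥ x + b) ⬝ᵥ Υ *ᵥ (B *ᵥ x + b) + ε)))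
      (stdGaussian m) := fun k => integrable_coord_quot hΥ hs B b hε (C.col k) k
  refine ⟨integrable_finsetSum _ fun k _ => hi k, ?_⟩
  have hi' : ∀ k, Integrable (fun x : Fin m → ℝ =>
      ((C.col k ⬝ᵥ Υ *ᵥ B.col k) * (1 / ((B *ᵥ x + b) ⬝ᵥ Υ *ᵥ (B *ᵥ x + b) + ε))
          - 2 * ((C.col k ⬝ᵥ Υ *ᵥ (B *ᵥ x + b)) / ((B *ᵥ x + b) ⬝ᵥ Υ *ᵥ (B *ᵥ x + b) + ε) *
            ((B.col k ⬝ᵥ Υ *ᵥ (B *ᵥ x + b)) / ((B *ᵥ x + b) ⬝ᵥ Υ *ᵥ (B *ᵥ x + b) + ε)))))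
      (stdGaussian m) := fun k => ((integrable_inv_reg hΥ B b hε).const_mul _).sub
      ((integrable_quot_mul_quot hΥ hs B b hε (C.col k) (B.col k)).const_mul 2)
  refine le_of_le_of_eq ?_ (integral_finsetSum Finset.univ fun k _ => hi k).symm
  simp only [stein_quot hΥ hs B b hε]
  refine le_of_le_of_eq ?_ (integral_finsetSum Finset.univ fun k _ => hi' k)
  rw [← integral_const_mul]
  refine integral_mono ((integrable_inv_reg hΥ B b hε).const_mul _)
    (integrable_finsetSum _ fun k _ => hi' k) fun x => ?_
  have hq := reg_pos hΥ B b hε x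
  have hspec := dot_le_opNorm Υ M hΥ hMs (B *ᵥ x + b)
  have hop : 0 ≤ matOpNorm (Υ * M) := norm_nonneg _
  simp only
  set y := B *ᵥ x + b with hy
  set q := y ⬝ᵥ Υ *ᵥ y + ε with hqd
  have s1 : ∑ k, C.col k ⬝ᵥ Υ *ᵥ B.col k = (Υ * M).trace := by
    have : ∑ k, C.col k ⬝ᵥ Υ *ᵥ B.col k = (Cᵀ * (Υ * B)).trace := by
      simp only [Matrix.trace, Matrix.diag, Matrix.mul_apply, dotProduct, mulVec, col,
        transpose_apply]
    rw [this, Matrix.trace_mul_comm, Matrix.mul_assoc, ← hMs.eq, hM, transpose_mul,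
      transpose_transpose]
  have s2 : ∑ k, (C.col k ⬝ᵥ Υ *ᵥ y) * (B.col k ⬝ᵥ Υ *ᵥ y) = (Υ *ᵥ y) ⬝ᵥ M *ᵥ (Υ *ᵥ y) := by
    have : ∑ k, (C.col k ⬝ᵥ Υ *ᵥ y) * (B.col k ⬝ᵥ Υ *ᵥ y)
        = (Cᵀ *ᵥ (Υ *ᵥ y)) ⬝ᵥ (Bᵀ *ᵥ (Υ *ᵥ y)) := rfl
    rw [this, hM, ← mulVec_mulVec, dotProduct_mulVec _ C, mulVec_transpose C]
  have s3 : ∑ k, ((C.col k ⬝ᵥ Υ *ᵥ B.col k) * (1 / q)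
      - 2 * ((C.col k ⬝ᵥ Υ *ᵥ y) / q * ((B.col k ⬝ᵥ Υ *ᵥ y) / q)))
      = (Υ * M).trace * (1 / q) - 2 * ((Υ *ᵥ y) ⬝ᵥ M *ᵥ (Υ *ᵥ y)) / q ^ 2 := by
    rw [Finset.sum_sub_distrib, ← Finset.sum_mul, s1, ← s2, Finset.mul_sum, Finset.sum_div]
    congr 1
    refine Finset.sum_congr rfl fun k _ => ?_
    field_simp
  rw [s3, sub_mul]
  have : 2 * ((Υ *ᵥ y) ⬝ᵥ M *ᵥ (Υ *ᵥ y)) / q ^ 2 ≤ 2 * matOpNorm (Υ * M) * (1 / q) := by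
    rw [mul_one_div, div_le_div_iff₀ (by positivity) hq]
    have h1 : (Υ *ᵥ y) ⬝ᵥ M *ᵥ (Υ *ᵥ y) ≤ matOpNorm (Υ * M) * q := by
      rw [hqd, mul_add]
      have := mul_nonneg hop hε.le
      linarith
    have h2 := mul_le_mul_of_nonneg_right h1 hq.le
    nlinarith
  linarith

/-! ### The risk of the regularized and of the exact estimator -/

/-- Second moment of an affine image of a standard Gaussian vector in the `Υ`-norm. -/
theorem affine_quad_moment {d m : ℕ} {Υ : Matrix (Fin d) (Fin d) ℝ} (hs : Υ.IsSymm)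
    (B : Matrix (Fin d) (Fin m) ℝ) (b : Fin d → ℝ) :
    Integrable (fun x => (B *ᵥ x + b) ⬝ᵥ Υ *ᵥ (B *ᵥ x + b)) (stdGaussian m) ∧
      ∫ x, (B *ᵥ x + b) ⬝ᵥ Υ *ᵥ (B *ᵥ x + b) ∂(stdGaussian m)
        = (Bᵀ * Υ * B).trace + b ⬝ᵥ Υ *ᵥ b := by
  have e : ∀ x : Fin m → ℝ, (B *ᵥ x + b) ⬝ᵥ Υ *ᵥ (B *ᵥ x + b)
      = x ⬝ᵥ (Bᵀ * Υ * B) *ᵥ x + ((2 : ℝ) • (Bᵀ *ᵥ (Υ *ᵥ b))) ⬝ᵥ x + b ⬝ᵥ Υ *ᵥ b := by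
    intro x
    have h1 : x ⬝ᵥ (Bᵀ * Υ * B) *ᵥ x = (B *ᵥ x) ⬝ᵥ Υ *ᵥ (B *ᵥ x) := by
      rw [← mulVec_mulVec, ← mulVec_mulVec, dotProduct_mulVec x, vecMul_transpose]
    have h2 : (Bᵀ *ᵥ (Υ *ᵥ b)) ⬝ᵥ x = (B *ᵥ x) ⬝ᵥ Υ *ᵥ b := by
      rw [dotProduct_comm, dotProduct_mulVec x, vecMul_transpose]
    rw [h1, smul_dotProduct, h2]
    simp only [mulVec_add, dotProduct_add, add_dotProduct, smul_eq_mul]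
    rw [form_comm hs b (B *ᵥ x)]
    ring
  simp only [e]
  exact quad_moment _ _ _

/-- The risk bound for the regularized estimator `C x - γ Y / (Q + ε)`, with `Q + ε` in place of
`Q` throughout; here `a` is the mean of `Q`. Stein's inequality `stein_reg` handles the cross
term, `Q / (Q + ε)² ≤ 1 / (Q + ε)` the square term, and Jensen's inequality
`E[1 / (Q + ε)] ≥ 1 / (a + ε)` concludes. -/
theorem risk_reg {d m : ℕ} {Υ : Matrix (Fin d) (Fin d) ℝ} (hΥ : Υ.PosSemidef) (hs : Υ.IsSymm)
    (B C : Matrix (Fin d) (Fin m) ℝ) (b : Fin d → ℝ) {ε : ℝ} (hε : 0 < ε)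
    (M : Matrix (Fin d) (Fin d) ℝ) (hM : M = C * Bᵀ) (hMs : M.IsSymm)
    (γ : ℝ) (hγ0 : 0 < γ) (hγ2 : γ < 2 * ((Υ * M).trace - 2 * matOpNorm (Υ * M)))
    (a : ℝ) (ha : a = (Bᵀ * Υ * B).trace + b ⬝ᵥ Υ *ᵥ b) :
    Integrable (fun x =>
      (C *ᵥ x - (γ / ((B *ᵥ x + b) ⬝ᵥ Υ *ᵥ (B *ᵥ x + b) + ε)) • (B *ᵥ x + b)) ⬝ᵥ
      Υ *ᵥ (C *ᵥ x - (γ / ((B *ᵥ x + b) ⬝ᵥ Υ *ᵥ (B *ᵥ x + b) + ε)) • (B *ᵥ x + b)))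
      (stdGaussian m) ∧
    ∫ x, (C *ᵥ x - (γ / ((B *ᵥ x + b) ⬝ᵥ Υ *ᵥ (B *ᵥ x + b) + ε)) • (B *ᵥ x + b)) ⬝ᵥ
      Υ *ᵥ (C *ᵥ x - (γ / ((B *ᵥ x + b) ⬝ᵥ Υ *ᵥ (B *ᵥ x + b) + ε)) • (B *ᵥ x + b))
      ∂(stdGaussian m)
      ≤ (Cᵀ * Υ * C).trace
        - γ * (2 * ((Υ * M).trace - 2 * matOpNorm (Υ * M)) - γ) / (a + ε) := by
  obtain ⟨hS1, hS2⟩ := stein_reg hΥ hs B b hε C M hM hMs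
  obtain ⟨hQ1, hQ2⟩ := affine_quad_moment (m := m) hs B b
  obtain ⟨hU1, hU2⟩ := affine_quad_moment (m := m) hs C 0
  simp only [add_zero, zero_dotProduct] at hU1 hU2
  have hI := integrable_inv_reg (m := m) hΥ B b hε
  set κ := (Υ * M).trace - 2 * matOpNorm (Υ * M) with hκ
  set q : (Fin m → ℝ) → ℝ := fun x => (B *ᵥ x + b) ⬝ᵥ Υ *ᵥ (B *ᵥ x + b) + ε with hq
  have hqpos : ∀ x, 0 < q x := fun x => reg_pos hΥ B b hε x
  have e : ∀ x : Fin m → ℝ, (C *ᵥ x - (γ / q x) • (B *ᵥ x + b)) ⬝ᵥ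
      Υ *ᵥ (C *ᵥ x - (γ / q x) • (B *ᵥ x + b))
      = (C *ᵥ x) ⬝ᵥ Υ *ᵥ (C *ᵥ x) - 2 * γ * (((C *ᵥ x) ⬝ᵥ Υ *ᵥ (B *ᵥ x + b)) * (1 / q x))
        + γ ^ 2 * (((B *ᵥ x + b) ⬝ᵥ Υ *ᵥ (B *ᵥ x + b)) * (1 / q x) ^ 2) := by
    intro x
    generalize B *ᵥ x + b = y
    generalize C *ᵥ x = u
    simp only [mulVec_sub, mulVec_smul, dotProduct_sub, dotProduct_smul, sub_dotProduct,
      smul_dotProduct, smul_eq_mul]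
    rw [form_comm hs y u]
    ring
  have hle : ∀ x, ((B *ᵥ x + b) ⬝ᵥ Υ *ᵥ (B *ᵥ x + b)) * (1 / q x) ^ 2 ≤ 1 / q x := by
    intro x
    have h := hqpos x
    have h1 : (B *ᵥ x + b) ⬝ᵥ Υ *ᵥ (B *ᵥ x + b) ≤ q x := by simp only [hq]; linarith
    calc _ ≤ q x * (1 / q x) ^ 2 := by gcongr
      _ = 1 / q x := by field_simp
  have hqc : Continuous q := (continuous_affine_quad Υ B b).add continuous_const
  have h3 : Integrable (fun x => ((B *ᵥ x + b) ⬝ᵥ Υ *ᵥ (B *ᵥ x + b)) * (1 / q x) ^ 2)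
      (stdGaussian m) := by
    refine hI.mono' ?_ (ae_of_all _ fun x => ?_)
    · exact ((continuous_affine_quad Υ B b).mul
        ((continuous_const.div₀ hqc fun x => (hqpos x).ne').pow 2)).aestronglyMeasurable
    · rw [Real.norm_of_nonneg (mul_nonneg (form_nonneg hΥ _) (sq_nonneg _))]
      exact hle x
  have hA := hU1.sub (hS1.const_mul (2 * γ))
  have hint := hA.add (h3.const_mul (γ ^ 2))
  change Integrable (fun x => (C *ᵥ x - (γ / q x) • (B *ᵥ x + b)) ⬝ᵥ
      Υ *ᵥ (C *ᵥ x - (γ / q x) • (B *ᵥ x + b))) _ ∧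
      ∫ x, (C *ᵥ x - (γ / q x) • (B *ᵥ x + b)) ⬝ᵥ
      Υ *ᵥ (C *ᵥ x - (γ / q x) • (B *ᵥ x + b)) ∂(stdGaussian m) ≤ _
  simp only [e]
  refine ⟨hint, ?_⟩
  have e2 := integral_add hA (h3.const_mul (γ ^ 2))
  have e3 := integral_sub hU1 (hS1.const_mul (2 * γ))
  simp only [integral_const_mul] at e2 e3
  simp only [Pi.sub_apply] at e2
  rw [e2, e3, hU2]
  have h4 : ∫ x, ((B *ᵥ x + b) ⬝ᵥ Υ *ᵥ (B *ᵥ x + b)) * (1 / q x) ^ 2 ∂(stdGaussian m)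
      ≤ ∫ x, 1 / q x ∂(stdGaussian m) := integral_mono h3 hI hle
  -- Jensen for `t ↦ 1 / t`: integrate its tangent line at the mean `a + ε` of `q`.
  have ha0 : 0 ≤ a := by
    rw [ha, ← hQ2]; exact integral_nonneg fun x => form_nonneg hΥ _
  have hs0 : 0 < a + ε := by linarith
  have hqI : Integrable q (stdGaussian m) := hQ1.add (integrable_const ε)
  have hqv : ∫ x, q x ∂(stdGaussian m) = a + ε := by
    simp only [hq]
    rw [integral_add hQ1 (integrable_const ε), hQ2, ha]
    simp
  have h5 : 1 / (a + ε) ≤ ∫ x, 1 / q x ∂(stdGaussian m) := by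
    have hi : Integrable (fun x => 2 / (a + ε) - (1 / (a + ε) ^ 2) * q x) (stdGaussian m) :=
      (integrable_const _).sub (hqI.const_mul _)
    have hv : ∫ x, (2 / (a + ε) - (1 / (a + ε) ^ 2) * q x) ∂(stdGaussian m) = 1 / (a + ε) := by
      rw [integral_sub (integrable_const _) (hqI.const_mul _), integral_const_mul, hqv]
      simp
      field_simp
      ring
    rw [← hv]
    refine integral_mono hi hI fun x => ?_
    have h := hqpos x
    have : 1 / q x - (2 / (a + ε) - (1 / (a + ε) ^ 2) * q x)
        = (q x - (a + ε)) ^ 2 / (q x * (a + ε) ^ 2) := by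
      field_simp
      ring
    have h' : 0 ≤ (q x - (a + ε)) ^ 2 / (q x * (a + ε) ^ 2) := by positivity
    simp only
    linarith
  have h6 := mul_le_mul_of_nonneg_left hS2 (by positivity : 0 ≤ 2 * γ)
  have h7 := mul_le_mul_of_nonneg_left h4 (sq_nonneg γ)
  have h8 := mul_le_mul_of_nonneg_left h5
    (mul_nonneg hγ0.le (by linarith : 0 ≤ 2 * κ - γ))
  rw [mul_one_div] at h8
  change 2 * γ * (κ * ∫ x, 1 / q x ∂(stdGaussian m)) ≤ 2 * γ *
    ∫ x, ((C *ᵥ x) ⬝ᵥ Υ *ᵥ (B *ᵥ x + b)) * (1 / q x) ∂(stdGaussian m) at h6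
  change (Cᵀ * Υ * C).trace - 2 * γ *
    ∫ x, ((C *ᵥ x) ⬝ᵥ Υ *ᵥ (B *ᵥ x + b)) * (1 / q x) ∂(stdGaussian m) + _ ≤ _
  linarith

/-- The risk bound for the exact estimator, by letting `ε = 1 / (n + 1) → 0` in `risk_reg`.
Fatou's lemma suffices, so the integrability of `1 / Q` never has to be addressed. -/
theorem risk_bound {d m : ℕ} {Υ : Matrix (Fin d) (Fin d) ℝ} (hΥ : Υ.PosSemidef) (hs : Υ.IsSymm)
    (hdef : ∀ y : Fin d → ℝ, y ⬝ᵥ Υ *ᵥ y = 0 → y = 0)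
    (B C : Matrix (Fin d) (Fin m) ℝ) (b : Fin d → ℝ)
    (M : Matrix (Fin d) (Fin d) ℝ) (hM : M = C * Bᵀ) (hMs : M.IsSymm)
    (γ : ℝ) (hγ0 : 0 < γ) (hγ2 : γ < 2 * ((Υ * M).trace - 2 * matOpNorm (Υ * M)))
    (a : ℝ) (ha : a = (Bᵀ * Υ * B).trace + b ⬝ᵥ Υ *ᵥ b) (ha0 : 0 < a) :
    ∫ x, (C *ᵥ x - (γ / ((B *ᵥ x + b) ⬝ᵥ Υ *ᵥ (B *ᵥ x + b))) • (B *ᵥ x + b)) ⬝ᵥ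
      Υ *ᵥ (C *ᵥ x - (γ / ((B *ᵥ x + b) ⬝ᵥ Υ *ᵥ (B *ᵥ x + b))) • (B *ᵥ x + b))
      ∂(stdGaussian m)
      ≤ (Cᵀ * Υ * C).trace
        - γ * (2 * ((Υ * M).trace - 2 * matOpNorm (Υ * M)) - γ) / a := by
  have hε : ∀ n : ℕ, (0 : ℝ) < 1 / ((n : ℝ) + 1) := fun n => by positivity
  have hlim := tendsto_one_div_add_atTop_nhds_zero_nat (𝕜 := ℝ)
  refine integral_le_of_tendsto_of_le (fun (n : ℕ) x =>
      (C *ᵥ x - (γ / ((B *ᵥ x + b) ⬝ᵥ Υ *ᵥ (B *ᵥ x + b) + 1 / ((n : ℝ) + 1))) •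
        (B *ᵥ x + b)) ⬝ᵥ Υ *ᵥ (C *ᵥ x -
          (γ / ((B *ᵥ x + b) ⬝ᵥ Υ *ᵥ (B *ᵥ x + b) + 1 / ((n : ℝ) + 1))) • (B *ᵥ x + b)))
    _ (fun n : ℕ => (Cᵀ * Υ * C).trace -
      γ * (2 * ((Υ * M).trace - 2 * matOpNorm (Υ * M)) - γ) / (a + 1 / ((n : ℝ) + 1))) _
    (fun n => ?_) (fun n x => form_nonneg hΥ _)
    (fun n => (risk_reg hΥ hs B C b (hε n) M hM hMs γ hγ0 hγ2 a ha).1) (fun x => ?_)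
    (fun n => (risk_reg hΥ hs B C b (hε n) M hM hMs γ hγ0 hγ2 a ha).2) ?_
  · have hc : Continuous fun x : Fin m → ℝ =>
        γ / ((B *ᵥ x + b) ⬝ᵥ Υ *ᵥ (B *ᵥ x + b) + 1 / ((n : ℝ) + 1)) :=
      continuous_const.div₀ ((continuous_affine_quad Υ B b).add continuous_const)
        fun x => (reg_pos hΥ B b (hε n) x).ne'
    have hv : Continuous fun x : Fin m → ℝ => C *ᵥ x -
        (γ / ((B *ᵥ x + b) ⬝ᵥ Υ *ᵥ (B *ᵥ x + b) + 1 / ((n : ℝ) + 1))) • (B *ᵥ x + b) := by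
      fun_prop
    exact (hv.dotProduct (continuous_const.matrix_mulVec hv)).measurable
  · by_cases h0 : (B *ᵥ x + b) ⬝ᵥ Υ *ᵥ (B *ᵥ x + b) = 0
    -- With `1 / 0 = 0` convergence also holds on `Q = 0`: there `Y = 0`, so both shrinkage
    -- terms vanish.
    · have hy := hdef _ h0
      simp [hy]
    · have h1 : Filter.Tendsto (fun n : ℕ =>
          γ / ((B *ᵥ x + b) ⬝ᵥ Υ *ᵥ (B *ᵥ x + b) + 1 / ((n : ℝ) + 1))) Filter.atTop
          (nhds (γ / ((B *ᵥ x + b) ⬝ᵥ Υ *ᵥ (B *ᵥ x + b)))) := by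
        refine tendsto_const_nhds.div ?_ h0
        simpa using hlim.const_add ((B *ᵥ x + b) ⬝ᵥ Υ *ᵥ (B *ᵥ x + b))
      have hc : Continuous fun t : ℝ =>
          (C *ᵥ x - t • (B *ᵥ x + b)) ⬝ᵥ Υ *ᵥ (C *ᵥ x - t • (B *ᵥ x + b)) := by
        fun_prop
      exact (hc.tendsto _).comp h1
  · refine tendsto_const_nhds.sub (tendsto_const_nhds.div ?_ ha0.ne')
    simpa using hlim.const_add a

/-! ### The theorem for `ξ` with covariance `Ω` -/

/-- First part of Corollary 1 (corr:bound / corr:bound_gen) of the paper in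
Gaussian-limit form: the asymptotic risk of the semi-modular posterior mean is
strictly smaller than that of the cut posterior mean. -/
theorem stmt_12 {m d₁ : ℕ} (hd₁ : 3 ≤ d₁)
    (Ω : Matrix (Fin m) (Fin m) ℝ) (hΩ : Ω.PosSemidef)
    (μ : Measure (Fin m → ℝ)) (hμ : IsGaussianLaw μ 0 Ω)
    (τ : Fin m → ℝ)
    (Γ₁ Γ : Matrix (Fin d₁) (Fin m) ℝ) (hΓ₁τ : Γ₁.mulVec τ = 0)
    (Υ : Matrix (Fin d₁) (Fin d₁) ℝ) (hΥ : Υ.PosDef) (hΥsymm : Υ.IsSymm)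
    (M : Matrix (Fin d₁) (Fin d₁) ℝ) (hMdef : M = (Γ₁ - Γ) * Ω * (Γ₁ - Γ)ᵀ)
    (hMcross : Γ₁ * Ω * (Γ₁ - Γ)ᵀ = M)
    (P : Matrix (Fin m) (Fin m) ℝ) (hPdef : P = (Γ₁ - Γ)ᵀ * Υ * (Γ₁ - Γ))
    (hMpd : M.PosDef)
    (W : Matrix (Fin d₁) (Fin d₁) ℝ) (hWdef : W = Υ * M)
    (hW : 0 < W.trace - 2 * matOpNorm W)
    (γ : ℝ) (hγ0 : 0 < γ) (hγ2 : γ < 2 * (W.trace - 2 * matOpNorm W)) :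
    ∀ Q : (Fin m → ℝ) → ℝ, Q = (fun x => (x + τ) ⬝ᵥ P.mulVec (x + τ)) →
    ∀ Ψ : (Fin m → ℝ) → Fin d₁ → ℝ,
      Ψ = (fun x => Γ₁.mulVec (x + τ) - (γ / Q x) • (Γ₁ - Γ).mulVec (x + τ)) →
      (∫ x, Ψ x ⬝ᵥ Υ.mulVec (Ψ x) ∂μ
          ≤ (Υ * Γ₁ * Ω * Γ₁ᵀ).trace
            - γ * (2 * (W.trace - 2 * matOpNorm W) - γ)
              / (τ ⬝ᵥ P.mulVec τ + (P * Ω).trace)) ∧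
      ∫ x, Ψ x ⬝ᵥ Υ.mulVec (Ψ x) ∂μ < (Υ * Γ₁ * Ω * Γ₁ᵀ).trace ∧
      (Υ * Γ₁ * Ω * Γ₁ᵀ).trace
        = ∫ x, Γ₁.mulVec (x + τ) ⬝ᵥ Υ.mulVec (Γ₁.mulVec (x + τ)) ∂μ := by
  intro Q hQ Ψ hΨ
  obtain ⟨A, hA, rfl⟩ := hμ
  set D := Γ₁ - Γ with hD
  set B := D * A with hB
  set C := Γ₁ * A with hC
  set b := D *ᵥ τ with hb
  have hMs : M.IsSymm := by simpa using hMpd.isHermitian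
  have hCB : M = C * Bᵀ := by
    rw [← hMcross, hC, hB, transpose_mul, ← hA]
    simp only [Matrix.mul_assoc]
  have hBB : M = B * Bᵀ := by
    rw [hMdef, hB, transpose_mul, ← hA]
    simp only [Matrix.mul_assoc]
  have hop : 0 ≤ matOpNorm W := norm_nonneg _
  have hps := hΥ.posSemidef
  -- `Q = 0` forces `Y = 0`, which makes the junk value `γ / 0 = 0` harmless in `risk_bound`.
  have hdef : ∀ y : Fin d₁ → ℝ, y ⬝ᵥ Υ *ᵥ y = 0 → y = 0 := by
    intro y hy
    by_contra hne
    have := hΥ.dotProduct_mulVec_pos hne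
    simp [hy] at this
  have hPq : ∀ z : Fin m → ℝ, z ⬝ᵥ P *ᵥ z = (D *ᵥ z) ⬝ᵥ Υ *ᵥ (D *ᵥ z) := by
    intro z
    rw [hPdef, ← mulVec_mulVec, ← mulVec_mulVec, dotProduct_mulVec z, vecMul_transpose]
  have htrB : (Bᵀ * Υ * B).trace = W.trace := by
    rw [Matrix.mul_assoc, Matrix.trace_mul_comm, Matrix.mul_assoc, ← hBB, hWdef]
  have htrP : (P * Ω).trace = W.trace := by
    rw [hPdef, hWdef, hMdef, Matrix.mul_assoc, Matrix.mul_assoc, Matrix.trace_mul_comm]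
    simp only [Matrix.mul_assoc]
  have htrC : (Υ * Γ₁ * Ω * Γ₁ᵀ).trace = (Cᵀ * Υ * C).trace := by
    rw [Matrix.mul_assoc Cᵀ, Matrix.trace_mul_comm Cᵀ, hC, transpose_mul, ← hA]
    simp only [Matrix.mul_assoc]
  set a := τ ⬝ᵥ P *ᵥ τ + (P * Ω).trace with ha
  have ha' : a = (Bᵀ * Υ * B).trace + b ⬝ᵥ Υ *ᵥ b := by
    rw [ha, htrP, htrB, hPq]; ring
  have ha0 : 0 < a := by
    have := form_nonneg hps b
    rw [ha', htrB]; linarith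
  have hDx : ∀ x, D *ᵥ (0 + A *ᵥ x + τ) = B *ᵥ x + b := by
    intro x; rw [zero_add, mulVec_add, mulVec_mulVec]
  have hGx : ∀ x, Γ₁ *ᵥ (0 + A *ᵥ x + τ) = C *ᵥ x := by
    intro x; rw [zero_add, mulVec_add, mulVec_mulVec, hΓ₁τ, add_zero]
  have hmeasA : Measurable fun x : Fin m → ℝ => (0 : Fin m → ℝ) + A *ᵥ x := by
    have : Continuous fun x : Fin m → ℝ => (0 : Fin m → ℝ) + A *ᵥ x := by fun_prop
    exact this.measurable
  have hΨm : Measurable fun x => Ψ x ⬝ᵥ Υ *ᵥ (Ψ x) := by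
    have hQm : Measurable Q := by
      rw [hQ]
      have : Continuous fun x : Fin m → ℝ => (x + τ) ⬝ᵥ P *ᵥ (x + τ) := by fun_prop
      exact this.measurable
    have h1 : Measurable fun x : Fin m → ℝ => Γ₁ *ᵥ (x + τ) := by
      have : Continuous fun x : Fin m → ℝ => Γ₁ *ᵥ (x + τ) := by fun_prop
      exact this.measurable
    have h2 : Measurable fun x : Fin m → ℝ => D *ᵥ (x + τ) := by
      have : Continuous fun x : Fin m → ℝ => D *ᵥ (x + τ) := by fun_prop
      exact this.measurable
    have hΨ' : Measurable Ψ := by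
      rw [hΨ]
      exact h1.sub ((measurable_const.div hQm).smul h2)
    have hc : Continuous fun v : Fin d₁ → ℝ => v ⬝ᵥ Υ *ᵥ v := by fun_prop
    exact hc.measurable.comp hΨ'
  have hUm : Measurable fun x : Fin m → ℝ =>
      Γ₁ *ᵥ (x + τ) ⬝ᵥ Υ *ᵥ (Γ₁ *ᵥ (x + τ)) := by
    have : Continuous fun x : Fin m → ℝ =>
      Γ₁ *ᵥ (x + τ) ⬝ᵥ Υ *ᵥ (Γ₁ *ᵥ (x + τ)) := by fun_prop
    exact this.measurable
  have hmain := risk_bound hps hΥsymm hdef B C b M hCB hMs γ hγ0 (by rwa [← hWdef]) a ha' ha0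
  have hrisk : ∫ x, Ψ x ⬝ᵥ Υ *ᵥ (Ψ x)
      ∂(Measure.map (fun x => 0 + A *ᵥ x) (stdGaussian m))
      ≤ (Υ * Γ₁ * Ω * Γ₁ᵀ).trace - γ * (2 * (W.trace - 2 * matOpNorm W) - γ) / a := by
    rw [integral_map hmeasA.aemeasurable hΨm.aestronglyMeasurable, htrC]
    simp only [hΨ, hQ, hPq, hDx, hGx]
    rw [← hWdef] at hmain
    exact hmain
  refine ⟨hrisk, hrisk.trans_lt ?_, ?_⟩
  · have : 0 < γ * (2 * (W.trace - 2 * matOpNorm W) - γ) / a :=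
      div_pos (mul_pos hγ0 (by linarith)) ha0
    linarith
  · rw [integral_map hmeasA.aemeasurable hUm.aestronglyMeasurable, htrC]
    simp only [hGx]
    have := (affine_quad_moment (m := m) hΥsymm C 0).2
    simp only [add_zero, zero_dotProduct] at this
    exact this.symm
end

section
/- Assume in addition that M is positive definite, that d₁ ≥ 3, and that Υ = M⁻¹. Then for every real γ, E[‖Ψ(γ)‖²_{M⁻¹}] = tr(M⁻¹·Γ₁·Ω·Γ₁ᵀ) − γ·(2·(d₁ − 2) − γ)·E[1/Q]; in particular, for 0 < γ < 2·(d₁ − 2) the asymptotic risk of the semi-modular posterior mean is strictly smaller than tr(M⁻¹·Γ₁·Ω·Γ₁ᵀ), the asymptotic risk of the cut posterior mean. -/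
/-!
Write `ξ = A z` with `z` standard Gaussian and `A Aᵀ = Ω`, and put `u = Γ₁ A z` (which equals
`Γ₁ (ξ + τ)` because `Γ₁ τ = 0`), `w = (Γ₁ - Γ)(ξ + τ)` and `N = M⁻¹`, so that `Q = wᵀ N w`.
Expanding the square, `‖Ψ γ‖²_N = ‖u‖²_N - 2 γ uᵀ N w / Q + γ² / Q`. The first term has expectation
`tr (N Γ₁ Ω Γ₁ᵀ)` (`integral_quad_linear`), so the claim reduces to
`E[uᵀ N w / Q] = (d₁ - 2) E[1 / Q]` (`stein_quad`).

That is Stein's identity for the vector field `Bᵀ N w / Q`, `B = Γ₁ A`: the hypothesis that `u` and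
`w` have cross-covariance `M = N⁻¹` makes its divergence `(d₁ - 2) / Q`. The field is singular where
`w = 0`, so the identity is first proved with `Q + ε` in place of `Q` (`stein_regularized`). The
regularized identity itself bounds `E[1 / (Q + ε)]` uniformly in `ε` when `d₁ ≥ 3`
(`integral_inv_quad_add_le`). Hence `1 / Q` is integrable and `Q > 0` almost surely
(`integrable_inv_quad`), and dominated convergence lets `ε → 0`. Strictness of the risk reduction
follows from `E[1 / Q] > 0`.
-/


open Matrix MeasureTheory ProbabilityTheory

/-! ### Gaussian integration by parts -/

/-- Stein's identity on the line, by integrating the derivative of `f` times the Gaussian density,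
which satisfies `φ' t = -t * φ t`. -/
theorem integral_mul_id_gaussian {f f' : ℝ → ℝ} (hd : ∀ t, HasDerivAt f (f' t) t)
    (hf : Integrable f (gaussianReal 0 1)) (hxf : Integrable (fun t => t * f t) (gaussianReal 0 1))
    (hf' : Integrable f' (gaussianReal 0 1)) :
    ∫ t, t * f t ∂gaussianReal 0 1 = ∫ t, f' t ∂gaussianReal 0 1 := by
  have key : ∀ g : ℝ → ℝ, Integrable g (gaussianReal 0 1) →
      Integrable (fun t => gaussianPDFReal 0 1 t * g t) := by
    intro g hg
    rw [gaussianReal_of_var_ne_zero _ one_ne_zero,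
      integrable_withDensity_iff_integrable_smul' (measurable_gaussianPDF 0 1)
        (ae_of_all _ fun _ => gaussianPDF_lt_top)] at hg
    simpa [toReal_gaussianPDF] using hg
  have hpdf : ∀ t, HasDerivAt (gaussianPDFReal 0 1) (-t * gaussianPDFReal 0 1 t) t := by
    intro t
    have h : HasDerivAt (fun t : ℝ => -(t - 0) ^ 2 / (2 * ((1 : NNReal) : ℝ))) (-t) t := by
      refine ((((hasDerivAt_id t).sub_const 0).pow 2).neg.div_const
        (2 * ((1 : NNReal) : ℝ))).congr_deriv ?_
      simp only [id, NNReal.coe_one]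
      ring
    rw [gaussianPDFReal_def]
    refine ((h.exp).const_mul ((√(2 * Real.pi * ((1 : NNReal) : ℝ)))⁻¹)).congr_deriv ?_
    ring
  have h0 := integral_eq_zero_of_hasDerivAt_of_integrable
    (f := fun t => gaussianPDFReal 0 1 t * f t)
    (f' := fun t => gaussianPDFReal 0 1 t * f' t - gaussianPDFReal 0 1 t * (t * f t))
    (fun t => ((hpdf t).mul (hd t)).congr_deriv (by ring))
    ((key _ hf').sub (key _ hxf)) (key _ hf)
  rw [integral_sub (key _ hf') (key _ hxf)] at h0
  rw [integral_gaussianReal_eq_integral_smul one_ne_zero,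
    integral_gaussianReal_eq_integral_smul one_ne_zero]
  simp only [smul_eq_mul]
  linarith

/-- Stein's identity for the standard Gaussian measure in the `i`-th coordinate: Fubini reduces it to
the one-dimensional identity on almost every line parallel to the `i`-th axis. -/
theorem stein_stdGaussian {m : ℕ} (i : Fin m) {f f' : (Fin m → ℝ) → ℝ}
    (hd : ∀ z, HasDerivAt (fun t => f (Function.update z i t)) (f' z) (z i))
    (hf : Integrable f (_root_.stdGaussian m))
    (hxf : Integrable (fun z => z i * f z) (_root_.stdGaussian m))
    (hf' : Integrable f' (_root_.stdGaussian m)) :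
    ∫ z, z i * f z ∂_root_.stdGaussian m = ∫ z, f' z ∂_root_.stdGaussian m := by
  cases m with
  | zero => exact i.elim0
  | succ n =>
    have mp := (measurePreserving_piFinSuccAbove
      (fun _ : Fin (n + 1) => gaussianReal 0 1) i).symm
    have e : ∀ p : ℝ × (Fin n → ℝ),
        (MeasurableEquiv.piFinSuccAbove (fun _ : Fin (n + 1) => ℝ) i).symm p
          = i.insertNth p.1 p.2 := fun p => rfl
    have hint : ∀ g : (Fin (n + 1) → ℝ) → ℝ, Integrable g (_root_.stdGaussian (n + 1)) →
        Integrable (fun p : ℝ × (Fin n → ℝ) => g (i.insertNth p.1 p.2))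
          ((gaussianReal 0 1).prod (Measure.pi fun _ => gaussianReal 0 1)) := by
      intro g hg
      exact (mp.integrable_comp_emb (MeasurableEquiv.measurableEmbedding _)).2 hg
    have hval : ∀ g : (Fin (n + 1) → ℝ) → ℝ, Integrable g (_root_.stdGaussian (n + 1)) →
        ∫ z, g z ∂_root_.stdGaussian (n + 1)
          = ∫ y, ∫ t, g (i.insertNth t y) ∂gaussianReal 0 1
              ∂(Measure.pi fun _ : Fin n => gaussianReal 0 1) := by
      intro g hg
      rw [← integral_prod_symm _ (hint g hg)]
      exact (mp.integral_comp' g).symm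
    rw [hval _ hxf, hval _ hf']
    apply integral_congr_ae
    filter_upwards [(hint _ hf).prod_left_ae, (hint _ hxf).prod_left_ae,
      (hint _ hf').prod_left_ae] with y h1 h2 h3
    simp only [Fin.insertNth_apply_same] at h2 ⊢
    refine integral_mul_id_gaussian (fun t => ?_) h1 h2 h3
    have := hd (i.insertNth t y)
    simpa using this

/-! ### Quadratic forms of Gaussian vectors -/

/-- The quadratic form `vᵀ N v`, i.e. the squared norm `‖v‖²_N` for positive definite `N`. -/
def quad {d : ℕ} (N : Matrix (Fin d) (Fin d) ℝ) (v : Fin d → ℝ) : ℝ := v ⬝ᵥ N *ᵥ v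

instance stdGaussian_isProbabilityMeasure (m : ℕ) :
    IsProbabilityMeasure (_root_.stdGaussian m) := by
  unfold _root_.stdGaussian; infer_instance

theorem memLp_affine {m d : ℕ} (B : Matrix (Fin d) (Fin m) ℝ) (b : Fin d → ℝ) (k : Fin d) :
    MemLp (fun z => (B *ᵥ z + b) k) 2 (_root_.stdGaussian m) := by
  have h : ∀ i : Fin m, MemLp (fun z : Fin m → ℝ => z i) 2 (_root_.stdGaussian m) := fun i =>
    (memLp_id_gaussianReal' 2 (by simp)).comp_measurePreserving
      (measurePreserving_eval (fun _ : Fin m => gaussianReal 0 1) i)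
  simp only [Pi.add_apply, mulVec, dotProduct]
  exact (memLp_finsetSum _ fun i _ => (h i).const_mul _).add (memLp_const _)

theorem integrable_dotProduct_affine {m d : ℕ} (B C : Matrix (Fin d) (Fin m) ℝ)
    (b c : Fin d → ℝ) :
    Integrable (fun z => (B *ᵥ z + b) ⬝ᵥ (C *ᵥ z + c)) (_root_.stdGaussian m) :=
  integrable_finsetSum _ fun k _ => (memLp_affine B b k).integrable_mul (memLp_affine C c k)

theorem continuous_quad {m d : ℕ} (N : Matrix (Fin d) (Fin d) ℝ) (C : Matrix (Fin d) (Fin m) ℝ)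
    (ν : Fin d → ℝ) : Continuous fun z => quad N (C *ᵥ z + ν) := by
  unfold quad; fun_prop

/-- Dividing by `Q + ε` preserves integrability, since `1 / (Q + ε)` is bounded by `1 / ε`. -/
theorem integrable_div_quad {m d : ℕ} {N : Matrix (Fin d) (Fin d) ℝ} (hN : N.PosDef)
    (C : Matrix (Fin d) (Fin m) ℝ) (ν : Fin d → ℝ) {ε : ℝ} (hε : 0 < ε)
    {g : (Fin m → ℝ) → ℝ} (hg : Integrable g (_root_.stdGaussian m)) :
    Integrable (fun z => g z / (quad N (C *ᵥ z + ν) + ε)) (_root_.stdGaussian m) := by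
  have h0 : ∀ v, 0 ≤ quad N v := fun v => by
    simpa [quad] using hN.posSemidef.dotProduct_mulVec_nonneg v
  simp_rw [div_eq_mul_inv]
  refine hg.mul_bdd (c := ε⁻¹) ?_ (ae_of_all _ fun z => ?_)
  · exact ((continuous_quad N C ν).measurable.add_const ε).inv.aestronglyMeasurable
  · rw [norm_inv, Real.norm_of_nonneg (by linarith [h0 (C *ᵥ z + ν)])]
    exact inv_anti₀ hε (by linarith [h0 (C *ᵥ z + ν)])

theorem update_eq {m : ℕ} (z : Fin m → ℝ) (i : Fin m) (t : ℝ) :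
    Function.update z i t = z + (t - z i) • Pi.single i 1 := by
  ext j
  rcases eq_or_ne j i with rfl | h
  · simp
  · simp [h]

theorem quad_add_smul {d : ℕ} {N : Matrix (Fin d) (Fin d) ℝ} (hN : Nᵀ = N) (v c : Fin d → ℝ)
    (s : ℝ) : quad N (v + s • c) = quad N v + s * (2 * (c ⬝ᵥ N *ᵥ v)) + s ^ 2 * quad N c := by
  have hs : v ⬝ᵥ N *ᵥ c = c ⬝ᵥ N *ᵥ v := by
    rw [dotProduct_comm, ← vecMul_transpose, hN, dotProduct_mulVec]
  simp only [quad, mulVec_add, mulVec_smul, dotProduct_add, add_dotProduct, smul_dotProduct,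
    dotProduct_smul, smul_eq_mul, hs]
  ring

/-! ### The regularized divergence identity -/

/-- The divergence identity `E[uᵀ N w / (Q + ε)] = E[d / (Q + ε) - 2 Q / (Q + ε) ^ 2]` for the
linear image `u = B z` and the affine image `w = C z + ν` of a standard Gaussian `z`, with
`Q = wᵀ N w`. Here `uᵀ N w` is `z` paired with the affine field `a = Bᵀ N w`, and `B Cᵀ N = 1` (the
cross-covariance of `u` and `w` is the inverse of `N`) gives `div a = d` and `a · ∇Q = 2 Q`. The
shift by `ε > 0` removes the singularity of the field `a / Q` where `w` vanishes. -/
theorem stein_regularized {m d : ℕ} {N : Matrix (Fin d) (Fin d) ℝ} (hN : N.PosDef)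
    (B C : Matrix (Fin d) (Fin m) ℝ) (hBC : B * Cᵀ * N = 1) (ν : Fin d → ℝ) {ε : ℝ} (hε : 0 < ε) :
    ∫ z, (B *ᵥ z ⬝ᵥ N *ᵥ (C *ᵥ z + ν)) / (quad N (C *ᵥ z + ν) + ε) ∂_root_.stdGaussian m
      = ∫ z, (d / (quad N (C *ᵥ z + ν) + ε)
          - 2 * quad N (C *ᵥ z + ν) / (quad N (C *ᵥ z + ν) + ε) ^ 2) ∂_root_.stdGaussian m := by
  have hNt : Nᵀ = N := by simpa using hN.isHermitian.eq
  have h0 : ∀ v, 0 ≤ quad N v := fun v => by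
    simpa [quad] using hN.posSemidef.dotProduct_mulVec_nonneg v
  set K : Matrix (Fin m) (Fin m) ℝ := Bᵀ * N * C with hK
  set κ : Fin m → ℝ := (Bᵀ * N) *ᵥ ν with hκ
  set L : Matrix (Fin m) (Fin m) ℝ := Cᵀ * N * C with hL
  set l : Fin m → ℝ := (Cᵀ * N) *ᵥ ν with hl
  have ea : ∀ z, (Bᵀ * N) *ᵥ (C *ᵥ z + ν) = K *ᵥ z + κ := fun z => by
    rw [mulVec_add, mulVec_mulVec]
  have eb : ∀ z, (Cᵀ * N) *ᵥ (C *ᵥ z + ν) = L *ᵥ z + l := fun z => by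
    rw [mulVec_add, mulVec_mulVec]
  set Q : (Fin m → ℝ) → ℝ := fun z => quad N (C *ᵥ z + ν) with hQ
  have hQε : ∀ z, Q z + ε ≠ 0 := fun z => by have := h0 (C *ᵥ z + ν); simp only [hQ]; positivity
  have hderiv : ∀ i z, HasDerivAt
      (fun t => (K *ᵥ Function.update z i t + κ) i / (Q (Function.update z i t) + ε))
      (K i i / (Q z + ε) - 2 * ((K *ᵥ z + κ) i * (L *ᵥ z + l) i) / (Q z + ε) / (Q z + ε))
      (z i) := by
    intro i z
    -- Along a coordinate line numerator and denominator are polynomials in the displacement.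
    have e1 : ∀ t, (K *ᵥ Function.update z i t + κ) i = (K *ᵥ z + κ) i + (t - z i) * K i i := by
      intro t
      simp only [update_eq, mulVec_add, mulVec_smul, Pi.add_apply, Pi.smul_apply, smul_eq_mul,
        mulVec_single_one, col_apply]
      ring
    have e2 : ∀ t, Q (Function.update z i t) = Q z + (t - z i) * (2 * (L *ᵥ z + l) i)
        + (t - z i) ^ 2 * quad N (C *ᵥ Pi.single i 1) := by
      intro t
      have : C *ᵥ Function.update z i t + ν = (C *ᵥ z + ν) + (t - z i) • C *ᵥ Pi.single i 1 := by
        rw [update_eq, mulVec_add, mulVec_smul]; abel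
      simp only [hQ, this, quad_add_smul hNt, ← eb]
      rw [← mulVec_mulVec, mulVec_single_one, ← transpose_transpose C]
      rfl
    simp only [e1, e2]
    have hs : HasDerivAt (fun t => t - z i) 1 (z i) := (hasDerivAt_id _).sub_const _
    refine (((hs.mul_const (K i i)).const_add _).div
      ((((hs.mul_const (2 * (L *ᵥ z + l) i)).const_add (Q z)).add
        ((hs.pow 2).mul_const (quad N (C *ᵥ Pi.single i 1)))).add_const ε) ?_).congr_deriv ?_
    · simpa using hQε z
    · have := hQε z
      simp only [sub_self]
      simp
      field_simp
  have iK : ∀ i, Integrable (fun z => (K *ᵥ z + κ) i) (_root_.stdGaussian m) := fun i =>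
    (memLp_affine K κ i).integrable (by norm_num)
  have izK : ∀ i, Integrable (fun z => z i * (K *ᵥ z + κ) i) (_root_.stdGaussian m) := fun i => by
    simpa using! (memLp_affine 1 0 i).integrable_mul (memLp_affine K κ i)
  have iKL : ∀ i, Integrable (fun z => 2 * ((K *ᵥ z + κ) i * (L *ᵥ z + l) i))
      (_root_.stdGaussian m) := fun i =>
    ((memLp_affine K κ i).integrable_mul (memLp_affine L l i)).const_mul 2
  have i1 : ∀ i, Integrable (fun z => z i * ((K *ᵥ z + κ) i / (Q z + ε)))
      (_root_.stdGaussian m) := fun i => by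
    simpa [mul_div_assoc] using! integrable_div_quad hN C ν hε (izK i)
  have i2 : ∀ i, Integrable (fun z => K i i / (Q z + ε)
      - 2 * ((K *ᵥ z + κ) i * (L *ᵥ z + l) i) / (Q z + ε) / (Q z + ε))
      (_root_.stdGaussian m) := fun i =>
    (integrable_div_quad hN C ν hε (integrable_const _)).sub
      (integrable_div_quad hN C ν hε (integrable_div_quad hN C ν hε (iKL i)))
  have st := fun i => stein_stdGaussian i (hderiv i) (integrable_div_quad hN C ν hε (iK i))
    (i1 i) (i2 i)
  have hsum := Finset.sum_congr (rfl : (Finset.univ : Finset (Fin m)) = _) fun i _ => st i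
  rw [← integral_finsetSum _ fun i _ => i1 i, ← integral_finsetSum _ fun i _ => i2 i] at hsum
  have htr : ∑ i, K i i = d := by
    have : C * Bᵀ * N = 1 := by
      have h : N * (C * Bᵀ) = 1 := by
        simpa [transpose_mul, hNt] using congrArg transpose hBC
      exact mul_eq_one_comm.1 h
    calc ∑ i, K i i = K.trace := rfl
      _ = (C * Bᵀ * N).trace := by rw [hK, trace_mul_comm, Matrix.mul_assoc]
      _ = d := by simp [this]
  -- The pairing of the field with `∇Q / 2 = Cᵀ N w`.
  have hKL : ∀ z, ∑ i, (K *ᵥ z + κ) i * (L *ᵥ z + l) i = Q z := by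
    intro z
    change (K *ᵥ z + κ) ⬝ᵥ (L *ᵥ z + l) = _
    rw [← ea, ← eb, ← mulVec_mulVec, ← mulVec_mulVec, mulVec_transpose, ← dotProduct_mulVec,
      mulVec_mulVec, mulVec_mulVec, hBC, one_mulVec, dotProduct_comm]
    rfl
  have hz : ∀ z, ∑ i, z i * (K *ᵥ z + κ) i = B *ᵥ z ⬝ᵥ N *ᵥ (C *ᵥ z + ν) := by
    intro z
    change z ⬝ᵥ (K *ᵥ z + κ) = _
    rw [← ea, ← mulVec_mulVec, dotProduct_mulVec, vecMul_transpose]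
  convert hsum using 2
  · ext z
    rw [← hz, Finset.sum_div]
    simp only [mul_div_assoc]
    rfl
  · ext z
    rw [Finset.sum_sub_distrib, ← Finset.sum_div, htr, ← Finset.sum_div, ← Finset.sum_div,
      ← Finset.mul_sum, hKL, div_div, sq]

theorem quad_nonneg {d : ℕ} {N : Matrix (Fin d) (Fin d) ℝ} (hN : N.PosDef) (v : Fin d → ℝ) :
    0 ≤ quad N v := by
  simpa [quad] using hN.posSemidef.dotProduct_mulVec_nonneg v

theorem transpose_eq {d : ℕ} {N : Matrix (Fin d) (Fin d) ℝ} (hN : N.PosDef) : Nᵀ = N := by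
  simpa using hN.isHermitian.eq

/-- Cauchy–Schwarz and AM–GM for the inner product given by `N`, with the weight `t` put on `w`.
Taking `t = 1 / Q` or `1 / (Q + ε)` dominates `uᵀ N w / Q` by `‖u‖²_N` and `1 / Q`. -/
theorem abs_mul_dotProduct_le {d : ℕ} {N : Matrix (Fin d) (Fin d) ℝ} (hN : N.PosDef)
    (u w : Fin d → ℝ) (t : ℝ) :
    |t * (u ⬝ᵥ N *ᵥ w)| ≤ (quad N u + t ^ 2 * quad N w) / 2 := by
  have h1 := quad_nonneg hN (t • w + (1 : ℝ) • u)
  have h2 := quad_nonneg hN (t • w + (-1 : ℝ) • u)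
  rw [quad_add_smul (transpose_eq hN)] at h1 h2
  have h3 : quad N (t • w) = t ^ 2 * quad N w := by
    simp only [quad, mulVec_smul, dotProduct_smul, smul_dotProduct, smul_eq_mul]; ring
  rw [h3] at h1 h2
  simp only [mulVec_smul, dotProduct_smul, smul_eq_mul] at h1 h2
  rw [abs_le]
  constructor <;> linarith

theorem integrable_quad_linear {m d : ℕ} (N : Matrix (Fin d) (Fin d) ℝ)
    (B : Matrix (Fin d) (Fin m) ℝ) :
    Integrable (fun z => quad N (B *ᵥ z)) (_root_.stdGaussian m) := by
  simpa [quad, mulVec_mulVec] using integrable_dotProduct_affine B (N * B) 0 0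

theorem integrable_cross {m d : ℕ} (N : Matrix (Fin d) (Fin d) ℝ)
    (B C : Matrix (Fin d) (Fin m) ℝ) (ν : Fin d → ℝ) :
    Integrable (fun z => B *ᵥ z ⬝ᵥ N *ᵥ (C *ᵥ z + ν)) (_root_.stdGaussian m) := by
  simpa [quad, mulVec_mulVec, mulVec_add] using integrable_dotProduct_affine B (N * C) 0 (N *ᵥ ν)

/-- The second moment of `B z`, obtained from Stein's identity applied to the linear field
`Bᵀ N B z`, whose divergence is `tr (Bᵀ N B)`. -/
theorem integral_quad_linear {m d : ℕ} (N : Matrix (Fin d) (Fin d) ℝ)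
    (B : Matrix (Fin d) (Fin m) ℝ) :
    ∫ z, quad N (B *ᵥ z) ∂_root_.stdGaussian m = (N * B * Bᵀ).trace := by
  set K : Matrix (Fin m) (Fin m) ℝ := Bᵀ * N * B with hK
  have hderiv : ∀ i z, HasDerivAt (fun t => (K *ᵥ Function.update z i t + 0) i) (K i i) (z i) := by
    intro i z
    have e1 : ∀ t, (K *ᵥ Function.update z i t + 0) i = (K *ᵥ z) i + (t - z i) * K i i := by
      intro t
      simp only [update_eq, mulVec_add, mulVec_smul, Pi.add_apply, Pi.smul_apply, smul_eq_mul,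
        mulVec_single_one, col_apply, Pi.zero_apply]
      ring
    simp only [e1]
    simpa using (((hasDerivAt_id (z i)).sub_const (z i)).mul_const (K i i)).const_add ((K *ᵥ z) i)
  have i1 : ∀ i, Integrable (fun z => z i * (K *ᵥ z + 0) i) (_root_.stdGaussian m) := fun i => by
    simpa using! (memLp_affine 1 0 i).integrable_mul (memLp_affine K 0 i)
  have st := fun i => stein_stdGaussian i (hderiv i)
    ((memLp_affine K 0 i).integrable (by norm_num)) (i1 i) (integrable_const _)
  have hsum := Finset.sum_congr (rfl : (Finset.univ : Finset (Fin m)) = _) fun i _ => st i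
  rw [← integral_finsetSum _ fun i _ => i1 i] at hsum
  have htr : (N * B * Bᵀ).trace = ∑ i, K i i := by
    rw [trace_mul_comm, ← Matrix.mul_assoc]; rfl
  rw [htr]
  convert hsum using 2
  · ext z
    change _ = z ⬝ᵥ (K *ᵥ z + 0)
    rw [add_zero, hK, Matrix.mul_assoc, ← mulVec_mulVec, dotProduct_mulVec, vecMul_transpose,
      ← mulVec_mulVec]
    rfl
  · simp

/-! ### The inverse moment of the quadratic form -/

/-- A bound on `E[1 / (Q + ε)]` that is uniform in `ε`. For `d ≥ 3` the right-hand side of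
`stein_regularized` is at least `E[1 / (Q + ε)]`, while its left-hand side is at most half of
`E ‖B z‖²_N + E[1 / (Q + ε)]`; the latter expectation is finite and can be absorbed. -/
theorem integral_inv_quad_add_le {m d : ℕ} (hd : 3 ≤ d) {N : Matrix (Fin d) (Fin d) ℝ}
    (hN : N.PosDef) (B C : Matrix (Fin d) (Fin m) ℝ) (hBC : B * Cᵀ * N = 1) (ν : Fin d → ℝ)
    {ε : ℝ} (hε : 0 < ε) :
    ∫ z, 1 / (quad N (C *ᵥ z + ν) + ε) ∂_root_.stdGaussian m
      ≤ ∫ z, quad N (B *ᵥ z) ∂_root_.stdGaussian m := by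
  have i1 := integrable_div_quad hN C ν hε (integrable_const (1 : ℝ))
  have iB := integrable_quad_linear N B
  have hd' : (3 : ℝ) ≤ d := by exact_mod_cast hd
  have hpos : ∀ z, 0 < quad N (C *ᵥ z + ν) + ε := fun z => by
    linarith [quad_nonneg hN (C *ᵥ z + ν)]
  have hQ2 : ∀ z, quad N (C *ᵥ z + ν) / (quad N (C *ᵥ z + ν) + ε) ^ 2
      ≤ 1 / (quad N (C *ᵥ z + ν) + ε) := fun z => by
    rw [div_le_div_iff₀ (by have := hpos z; positivity) (hpos z)]
    nlinarith [hpos z]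
  have lower : ∫ z, 1 / (quad N (C *ᵥ z + ν) + ε) ∂_root_.stdGaussian m
      ≤ ∫ z, (d / (quad N (C *ᵥ z + ν) + ε)
          - 2 * quad N (C *ᵥ z + ν) / (quad N (C *ᵥ z + ν) + ε) ^ 2) ∂_root_.stdGaussian m := by
    refine integral_mono i1 ?_ fun z => ?_
    · refine (integrable_div_quad hN C ν hε (integrable_const (d : ℝ))).sub ?_
      refine (i1.const_mul 2).mono' ?_ (ae_of_all _ fun z => ?_)
      · have := (continuous_quad N C ν).measurable
        exact ((this.const_mul 2).div ((this.add_const ε).pow_const 2)).aestronglyMeasurable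
      · rw [Real.norm_of_nonneg (div_nonneg (by linarith [quad_nonneg hN (C *ᵥ z + ν)])
          (sq_nonneg _)), mul_div_assoc]
        linarith [hQ2 z]
    · have h1 : 3 * (1 / (quad N (C *ᵥ z + ν) + ε)) ≤ d / (quad N (C *ᵥ z + ν) + ε) := by
        rw [mul_one_div]; exact div_le_div_of_nonneg_right hd' (hpos z).le
      have h2 := hQ2 z
      dsimp only
      rw [mul_div_assoc]
      linarith
  rw [← stein_regularized hN B C hBC ν hε] at lower
  have upper : ∫ z, (B *ᵥ z ⬝ᵥ N *ᵥ (C *ᵥ z + ν)) / (quad N (C *ᵥ z + ν) + ε)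
        ∂_root_.stdGaussian m
      ≤ ∫ z, (quad N (B *ᵥ z) + 1 / (quad N (C *ᵥ z + ν) + ε)) / 2 ∂_root_.stdGaussian m := by
    refine integral_mono (integrable_div_quad hN C ν hε (integrable_cross N B C ν))
      ((iB.add i1).div_const 2) fun z => ?_
    have h := (le_abs_self _).trans (abs_mul_dotProduct_le hN (B *ᵥ z) (C *ᵥ z + ν)
      (1 / (quad N (C *ᵥ z + ν) + ε)))
    have e : (1 / (quad N (C *ᵥ z + ν) + ε)) ^ 2 * quad N (C *ᵥ z + ν)
        = quad N (C *ᵥ z + ν) / (quad N (C *ᵥ z + ν) + ε) ^ 2 := by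
      rw [div_pow, one_pow, one_div_mul_eq_div]
    rw [e, one_div_mul_eq_div] at h
    dsimp only
    linarith [hQ2 z]
  rw [integral_div, integral_add iB i1] at upper
  linarith

/-- Fatou's lemma turns the uniform bound into finiteness of the inverse moment of `Q`. The integral
is taken of the `ENNReal` inverse, which is `∞` where `Q = 0`, so `Q > 0` almost everywhere follows
as well. -/
theorem integrable_inv_quad {m d : ℕ} (hd : 3 ≤ d) {N : Matrix (Fin d) (Fin d) ℝ}
    (hN : N.PosDef) (B C : Matrix (Fin d) (Fin m) ℝ) (hBC : B * Cᵀ * N = 1) (ν : Fin d → ℝ) :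
    (∀ᵐ z ∂_root_.stdGaussian m, 0 < quad N (C *ᵥ z + ν)) ∧
      Integrable (fun z => 1 / quad N (C *ᵥ z + ν)) (_root_.stdGaussian m) := by
  have hmeas := (continuous_quad N C ν).measurable
  have hε : ∀ n : ℕ, (0 : ℝ) < 1 / (n + 1) := fun n => Nat.one_div_pos_of_nat
  have hlim : ∫⁻ z, (ENNReal.ofReal (quad N (C *ᵥ z + ν)))⁻¹ ∂_root_.stdGaussian m
      ≤ ENNReal.ofReal (∫ z, quad N (B *ᵥ z) ∂_root_.stdGaussian m) := by
    have hpt : ∀ z, (ENNReal.ofReal (quad N (C *ᵥ z + ν)))⁻¹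
        = Filter.liminf (fun n : ℕ =>
          (ENNReal.ofReal (quad N (C *ᵥ z + ν) + 1 / ((n : ℝ) + 1)))⁻¹) Filter.atTop := by
      intro z
      refine (Filter.Tendsto.liminf_eq ?_).symm
      refine tendsto_inv_iff.2 (ENNReal.tendsto_ofReal ?_)
      simpa using tendsto_one_div_add_atTop_nhds_zero_nat.const_add (quad N (C *ᵥ z + ν))
    simp_rw [hpt]
    refine (lintegral_liminf_le fun n => ((hmeas.add_const _).ennreal_ofReal).inv).trans ?_
    refine Filter.liminf_le_of_le (by isBoundedDefault) fun b hb => ?_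
    obtain ⟨n, hn⟩ := hb.exists
    refine hn.trans ?_
    have hpos : ∀ z, 0 < quad N (C *ᵥ z + ν) + 1 / ((n : ℝ) + 1) := fun z => by
      linarith [quad_nonneg hN (C *ᵥ z + ν), hε n]
    have e : ∀ z, (ENNReal.ofReal (quad N (C *ᵥ z + ν) + 1 / ((n : ℝ) + 1)))⁻¹
        = ENNReal.ofReal (1 / (quad N (C *ᵥ z + ν) + 1 / ((n : ℝ) + 1))) := fun z => by
      rw [← ENNReal.ofReal_inv_of_pos (hpos z), one_div (quad N (C *ᵥ z + ν) + _)]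
    refine (lintegral_congr e).trans_le ?_
    rw [← ofReal_integral_eq_lintegral_ofReal
      (integrable_div_quad hN C ν (hε n) (integrable_const (1 : ℝ)))
      (ae_of_all _ fun z => (one_div_pos.2 (hpos z)).le)]
    exact ENNReal.ofReal_le_ofReal (integral_inv_quad_add_le hd hN B C hBC ν (hε n))
  have hfin := hlim.trans_lt ENNReal.ofReal_lt_top
  refine ⟨?_, (hmeas.const_div 1).aestronglyMeasurable, ?_⟩
  · filter_upwards [ae_lt_top hmeas.ennreal_ofReal.inv hfin.ne] with z hz
    rw [Pi.inv_apply, ENNReal.inv_lt_top] at hz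
    exact ENNReal.ofReal_pos.1 hz
  · refine (lintegral_mono fun z => ?_).trans_lt hfin
    rw [Real.enorm_of_nonneg (one_div_nonneg.2 (quad_nonneg hN _)), one_div]
    rcases (quad_nonneg hN (C *ᵥ z + ν)).eq_or_lt with h | h
    · simp [← h]
    · rw [ENNReal.ofReal_inv_of_pos h]

/-! ### Removing the regularization -/

/-- The identity `E[uᵀ N w / Q] = (d - 2) E[1 / Q]`, the limit `ε → 0` of `stein_regularized` by
dominated convergence. -/
theorem stein_quad {m d : ℕ} (hd : 3 ≤ d) {N : Matrix (Fin d) (Fin d) ℝ}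
    (hN : N.PosDef) (B C : Matrix (Fin d) (Fin m) ℝ) (hBC : B * Cᵀ * N = 1) (ν : Fin d → ℝ) :
    Integrable (fun z => (B *ᵥ z ⬝ᵥ N *ᵥ (C *ᵥ z + ν)) / quad N (C *ᵥ z + ν))
        (_root_.stdGaussian m) ∧
      ∫ z, (B *ᵥ z ⬝ᵥ N *ᵥ (C *ᵥ z + ν)) / quad N (C *ᵥ z + ν) ∂_root_.stdGaussian m
        = ((d : ℝ) - 2) * ∫ z, 1 / quad N (C *ᵥ z + ν) ∂_root_.stdGaussian m := by
  obtain ⟨hpos, hint⟩ := integrable_inv_quad hd hN B C hBC ν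
  have hmeas := (continuous_quad N C ν).measurable
  have iB := integrable_quad_linear N B
  have iX := integrable_cross N B C ν
  have hε : ∀ n : ℕ, (0 : ℝ) < 1 / (n + 1) := fun n => Nat.one_div_pos_of_nat
  have hbound : ∀ z, 0 < quad N (C *ᵥ z + ν) →
      |(B *ᵥ z ⬝ᵥ N *ᵥ (C *ᵥ z + ν)) / quad N (C *ᵥ z + ν)|
        ≤ (quad N (B *ᵥ z) + 1 / quad N (C *ᵥ z + ν)) / 2 := by
    intro z hz
    have h := abs_mul_dotProduct_le hN (B *ᵥ z) (C *ᵥ z + ν) (1 / quad N (C *ᵥ z + ν))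
    have e : (1 / quad N (C *ᵥ z + ν)) ^ 2 * quad N (C *ᵥ z + ν) = 1 / quad N (C *ᵥ z + ν) := by
      field_simp
    rwa [e, one_div_mul_eq_div] at h
  have iD : Integrable (fun z => (quad N (B *ᵥ z) + 1 / quad N (C *ᵥ z + ν)) / 2)
      (_root_.stdGaussian m) := (iB.add hint).div_const 2
  refine ⟨iD.mono' (iX.aestronglyMeasurable.div₀ hmeas.aestronglyMeasurable)
    (hpos.mono hbound), ?_⟩
  have hadd : ∀ z, Filter.Tendsto (fun n : ℕ => quad N (C *ᵥ z + ν) + 1 / ((n : ℝ) + 1))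
      Filter.atTop (nhds (quad N (C *ᵥ z + ν))) := fun z => by
    simpa using tendsto_one_div_add_atTop_nhds_zero_nat.const_add (quad N (C *ᵥ z + ν))
  have lim1 : Filter.Tendsto (fun n : ℕ => ∫ z, (B *ᵥ z ⬝ᵥ N *ᵥ (C *ᵥ z + ν)) /
        (quad N (C *ᵥ z + ν) + 1 / ((n : ℝ) + 1)) ∂_root_.stdGaussian m) Filter.atTop
      (nhds (∫ z, (B *ᵥ z ⬝ᵥ N *ᵥ (C *ᵥ z + ν)) / quad N (C *ᵥ z + ν)
        ∂_root_.stdGaussian m)) := by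
    refine tendsto_integral_of_dominated_convergence _
      (fun n => (integrable_div_quad hN C ν (hε n) iX).aestronglyMeasurable) iD ?_ ?_
    · intro n
      filter_upwards [hpos] with z hz
      refine le_trans ?_ (hbound z hz)
      rw [Real.norm_eq_abs, abs_div, abs_div, abs_of_pos hz,
        abs_of_pos (by linarith [hε n] : 0 < quad N (C *ᵥ z + ν) + 1 / ((n : ℝ) + 1))]
      exact div_le_div_of_nonneg_left (abs_nonneg _) hz (by linarith [hε n])
    · filter_upwards [hpos] with z hz
      exact tendsto_const_nhds.div (hadd z) hz.ne'
  have lim2 : Filter.Tendsto (fun n : ℕ => ∫ z, (d / (quad N (C *ᵥ z + ν) + 1 / ((n : ℝ) + 1))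
        - 2 * quad N (C *ᵥ z + ν) / (quad N (C *ᵥ z + ν) + 1 / ((n : ℝ) + 1)) ^ 2)
        ∂_root_.stdGaussian m) Filter.atTop
      (nhds (∫ z, ((d : ℝ) - 2) * (1 / quad N (C *ᵥ z + ν)) ∂_root_.stdGaussian m)) := by
    refine tendsto_integral_of_dominated_convergence
      (fun z => ((d : ℝ) + 2) * (1 / quad N (C *ᵥ z + ν))) (fun n => ?_) (hint.const_mul _) ?_ ?_
    · exact ((hmeas.add_const _).const_div _).sub
        ((hmeas.const_mul 2).div ((hmeas.add_const _).pow_const 2)) |>.aestronglyMeasurable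
    · intro n
      filter_upwards [hpos] with z hz
      have hε' := hε n
      set q := quad N (C *ᵥ z + ν)
      set e := 1 / ((n : ℝ) + 1)
      have h1 : (d : ℝ) / (q + e) ≤ d * (1 / q) := by
        rw [mul_one_div]
        exact div_le_div_of_nonneg_left (Nat.cast_nonneg _) hz (by linarith)
      have h2 : 2 * q / (q + e) ^ 2 ≤ 2 * (1 / q) := by
        rw [mul_one_div, div_le_div_iff₀ (by positivity) hz]
        nlinarith [mul_pos hz hε']
      have h3 : 0 ≤ (d : ℝ) / (q + e) := by positivity
      have h4 : 0 ≤ 2 * q / (q + e) ^ 2 := by positivity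
      rw [Real.norm_eq_abs, abs_le]
      constructor <;> linarith
    · filter_upwards [hpos] with z hz
      have := (tendsto_const_nhds (x := (d : ℝ))).div (hadd z) hz.ne' |>.sub
        ((tendsto_const_nhds (x := 2 * quad N (C *ᵥ z + ν))).div ((hadd z).pow 2)
          (pow_ne_zero 2 hz.ne'))
      have e : (d : ℝ) / quad N (C *ᵥ z + ν) - 2 * quad N (C *ᵥ z + ν) / quad N (C *ᵥ z + ν) ^ 2
          = ((d : ℝ) - 2) * (1 / quad N (C *ᵥ z + ν)) := by
        field_simp
      rw [e] at this
      exact this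
  simp_rw [← stein_regularized hN B C hBC ν (hε _)] at lim2
  rw [tendsto_nhds_unique lim1 lim2, integral_const_mul]
/-! ### The risk identity -/

/-- Corollary 2 of the paper in Gaussian-limit form: with loss weight matrix
`Υ = M⁻¹`, the risk reduction of the semi-modular posterior mean holds with exact
equality: for every real `γ`,
`E[‖Ψ(γ)‖²_{M⁻¹}] = tr(M⁻¹ Γ₁ Ω Γ₁ᵀ) - γ (2(d₁-2) - γ) E[1/Q]`; in particular for
`0 < γ < 2(d₁-2)` the risk is strictly smaller than `tr(M⁻¹ Γ₁ Ω Γ₁ᵀ)`, the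
asymptotic risk of the cut posterior mean. -/
theorem stmt_14 {m d₁ : ℕ} (hd₁ : 3 ≤ d₁)
    (Ω : Matrix (Fin m) (Fin m) ℝ) (hΩ : Ω.PosSemidef)
    (μ : Measure (Fin m → ℝ)) (hμ : IsGaussianLaw μ 0 Ω)
    (τ : Fin m → ℝ)
    (Γ₁ Γ : Matrix (Fin d₁) (Fin m) ℝ) (hΓ₁τ : Γ₁.mulVec τ = 0)
    (M : Matrix (Fin d₁) (Fin d₁) ℝ) (hMdef : M = (Γ₁ - Γ) * Ω * (Γ₁ - Γ)ᵀ)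
    (hMcross : Γ₁ * Ω * (Γ₁ - Γ)ᵀ = M) (hMpd : M.PosDef)
    (P : Matrix (Fin m) (Fin m) ℝ) (hPdef : P = (Γ₁ - Γ)ᵀ * M⁻¹ * (Γ₁ - Γ)) :
    ∀ Q : (Fin m → ℝ) → ℝ, Q = (fun x => (x + τ) ⬝ᵥ P.mulVec (x + τ)) →
    ∀ Ψ : ℝ → (Fin m → ℝ) → Fin d₁ → ℝ,
      Ψ = (fun γ x => Γ₁.mulVec (x + τ) - (γ / Q x) • (Γ₁ - Γ).mulVec (x + τ)) →
      (∀ γ : ℝ,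
        ∫ x, Ψ γ x ⬝ᵥ M⁻¹.mulVec (Ψ γ x) ∂μ
          = (M⁻¹ * Γ₁ * Ω * Γ₁ᵀ).trace
            - γ * (2 * ((d₁ : ℝ) - 2) - γ) * ∫ x, 1 / Q x ∂μ) ∧
      ∀ γ : ℝ, 0 < γ → γ < 2 * ((d₁ : ℝ) - 2) →
        ∫ x, Ψ γ x ⬝ᵥ M⁻¹.mulVec (Ψ γ x) ∂μ < (M⁻¹ * Γ₁ * Ω * Γ₁ᵀ).trace := by
  rintro Q rfl Ψ rfl
  obtain ⟨A, hA, rfl⟩ := hμ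
  have hMu : IsUnit M.det := (isUnit_iff_isUnit_det M).1 hMpd.isUnit
  have hN : M⁻¹.PosDef := hMpd.inv
  have hBC : Γ₁ * A * ((Γ₁ - Γ) * A)ᵀ * M⁻¹ = 1 := by
    have e : Γ₁ * A * ((Γ₁ - Γ) * A)ᵀ = M := by
      rw [← hMcross, ← hA, transpose_mul]; simp only [Matrix.mul_assoc]
    rw [e, mul_nonsing_inv _ hMu]
  have htr : (M⁻¹ * Γ₁ * Ω * Γ₁ᵀ).trace = (M⁻¹ * (Γ₁ * A) * (Γ₁ * A)ᵀ).trace := by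
    rw [← hA, transpose_mul]; simp only [Matrix.mul_assoc]
  have eB : ∀ z, Γ₁ *ᵥ (0 + A *ᵥ z + τ) = (Γ₁ * A) *ᵥ z := fun z => by
    rw [zero_add, mulVec_add, hΓ₁τ, add_zero, mulVec_mulVec]
  have eC : ∀ z, (Γ₁ - Γ) *ᵥ (0 + A *ᵥ z + τ) = ((Γ₁ - Γ) * A) *ᵥ z + (Γ₁ - Γ) *ᵥ τ := fun z => by
    rw [zero_add, mulVec_add, mulVec_mulVec]
  have eQ : ∀ y, y ⬝ᵥ P *ᵥ y = quad M⁻¹ ((Γ₁ - Γ) *ᵥ y) := fun y => by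
    rw [hPdef, Matrix.mul_assoc, ← mulVec_mulVec, dotProduct_mulVec, vecMul_transpose,
      ← mulVec_mulVec]
    rfl
  obtain ⟨hpos, hint⟩ := integrable_inv_quad hd₁ hN _ _ hBC ((Γ₁ - Γ) *ᵥ τ)
  obtain ⟨iS, hS⟩ := stein_quad hd₁ hN _ _ hBC ((Γ₁ - Γ) *ᵥ τ)
  have hB := integral_quad_linear M⁻¹ (Γ₁ * A)
  have iB := integrable_quad_linear M⁻¹ (Γ₁ * A)
  have hA_meas : AEMeasurable (fun x => (0 : Fin m → ℝ) + A *ᵥ x) (_root_.stdGaussian m) := by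
    have : Continuous (fun x => (0 : Fin m → ℝ) + A *ᵥ x) := by fun_prop
    exact this.measurable.aemeasurable
  have hQ_meas : Measurable fun x : Fin m → ℝ => (x + τ) ⬝ᵥ P *ᵥ (x + τ) :=
    Continuous.measurable (by fun_prop)
  have hinv : ∫ x, 1 / ((x + τ) ⬝ᵥ P *ᵥ (x + τ))
        ∂(_root_.stdGaussian m).map (fun x => 0 + A *ᵥ x)
      = ∫ z, 1 / quad M⁻¹ (((Γ₁ - Γ) * A) *ᵥ z + (Γ₁ - Γ) *ᵥ τ) ∂_root_.stdGaussian m := by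
    rw [integral_map hA_meas (hQ_meas.const_div 1).aestronglyMeasurable]
    simp_rw [eQ, eC]
  have hrisk : ∀ γ : ℝ, ∫ x, quad M⁻¹ (Γ₁ *ᵥ (x + τ)
          - (γ / ((x + τ) ⬝ᵥ P *ᵥ (x + τ))) • (Γ₁ - Γ) *ᵥ (x + τ))
        ∂(_root_.stdGaussian m).map (fun x => 0 + A *ᵥ x)
      = (M⁻¹ * Γ₁ * Ω * Γ₁ᵀ).trace - γ * (2 * ((d₁ : ℝ) - 2) - γ) *
        ∫ x, 1 / ((x + τ) ⬝ᵥ P *ᵥ (x + τ)) ∂(_root_.stdGaussian m).map (fun x => 0 + A *ᵥ x) := by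
    intro γ
    have hΨ_meas : Measurable fun x : Fin m → ℝ => Γ₁ *ᵥ (x + τ)
        - (γ / ((x + τ) ⬝ᵥ P *ᵥ (x + τ))) • (Γ₁ - Γ) *ᵥ (x + τ) := by
      have h1 : Measurable fun x : Fin m → ℝ => Γ₁ *ᵥ (x + τ) :=
        Continuous.measurable (by fun_prop)
      have h2 : Measurable fun x : Fin m → ℝ => (Γ₁ - Γ) *ᵥ (x + τ) :=
        Continuous.measurable (by fun_prop)
      exact h1.sub ((hQ_meas.const_div γ).smul h2)
    have hq : Measurable (quad M⁻¹) :=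
      Continuous.measurable (by unfold quad; fun_prop)
    have hqΨ : Measurable fun x : Fin m → ℝ => quad M⁻¹ (Γ₁ *ᵥ (x + τ)
        - (γ / ((x + τ) ⬝ᵥ P *ᵥ (x + τ))) • (Γ₁ - Γ) *ᵥ (x + τ)) := hq.comp hΨ_meas
    rw [hinv, integral_map hA_meas hqΨ.aestronglyMeasurable, htr, ← hB]
    have hpt : ∀ z, quad M⁻¹ (Γ₁ *ᵥ (0 + A *ᵥ z + τ)
          - (γ / ((0 + A *ᵥ z + τ) ⬝ᵥ P *ᵥ (0 + A *ᵥ z + τ))) • (Γ₁ - Γ) *ᵥ (0 + A *ᵥ z + τ))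
        = quad M⁻¹ ((Γ₁ * A) *ᵥ z)
          - 2 * γ * (((Γ₁ * A) *ᵥ z ⬝ᵥ M⁻¹ *ᵥ (((Γ₁ - Γ) * A) *ᵥ z + (Γ₁ - Γ) *ᵥ τ))
              / quad M⁻¹ (((Γ₁ - Γ) * A) *ᵥ z + (Γ₁ - Γ) *ᵥ τ))
          + γ ^ 2 * (1 / quad M⁻¹ (((Γ₁ - Γ) * A) *ᵥ z + (Γ₁ - Γ) *ᵥ τ)) := by
      intro z
      rw [eQ, eC, eB]
      generalize (Γ₁ * A) *ᵥ z = u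
      generalize ((Γ₁ - Γ) * A) *ᵥ z + (Γ₁ - Γ) *ᵥ τ = w
      have hs : u ⬝ᵥ M⁻¹ *ᵥ w = w ⬝ᵥ M⁻¹ *ᵥ u := by
        rw [dotProduct_comm, ← vecMul_transpose, transpose_eq hN, dotProduct_mulVec]
      rw [sub_eq_add_neg, ← neg_smul, quad_add_smul (transpose_eq hN), hs]
      rcases eq_or_ne (quad M⁻¹ w) 0 with h | h
      -- At `Q = 0` both sides still agree, because division by zero returns zero.
      · simp [h]
      · field_simp
        ring
    have iBS : Integrable (fun z => quad M⁻¹ ((Γ₁ * A) *ᵥ z)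
        - 2 * γ * (((Γ₁ * A) *ᵥ z ⬝ᵥ M⁻¹ *ᵥ (((Γ₁ - Γ) * A) *ᵥ z + (Γ₁ - Γ) *ᵥ τ))
          / quad M⁻¹ (((Γ₁ - Γ) * A) *ᵥ z + (Γ₁ - Γ) *ᵥ τ))) (_root_.stdGaussian m) :=
      iB.sub (iS.const_mul _)
    simp_rw [hpt]
    rw [integral_add iBS (hint.const_mul _),
      integral_sub iB (iS.const_mul _), integral_const_mul, integral_const_mul, hS]
    ring
  refine ⟨hrisk, fun γ h0 h2 => ?_⟩
  refine (hrisk γ).trans_lt ?_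
  rw [hinv]
  have hI : 0 < ∫ z, 1 / quad M⁻¹ (((Γ₁ - Γ) * A) *ᵥ z + (Γ₁ - Γ) *ᵥ τ)
      ∂_root_.stdGaussian m := by
    have hnn : ∀ z, 0 ≤ 1 / quad M⁻¹ (((Γ₁ - Γ) * A) *ᵥ z + (Γ₁ - Γ) *ᵥ τ) := fun z =>
      one_div_nonneg.2 (quad_nonneg hN _)
    refine (integral_nonneg hnn).lt_of_ne fun h => ?_
    obtain ⟨z, hz, hz'⟩ := (hpos.and ((integral_eq_zero_iff_of_nonneg hnn hint).1 h.symm)).exists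
    exact (one_div_pos.2 hz).ne' hz'
  have := mul_pos (mul_pos h0 (sub_pos.2 h2)) hI
  linarith
end
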